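/- arXiv:1111.2273 — 12 statements merged into one kernel-verified Lean document; each statement's English description precedes it below -/
import Mathlib

section
/- Let X be an infinite dimensional real Banach space with norm ‖·‖. Then for every ε > 0 there exists an equivalent norm |||·||| on X such that the Banach–Mazur distance between (X, ‖·‖) and (X, |||·|||) is at most 1 + ε, and (X, |||·|||) admits an infinite equilateral set; i.e., there exist λ > 0 and an infinite set S ⊆ X with |||x − y||| = λ for all distinct x, y ∈ S. -/
/-- `N` is a norm on the real vector space `X`. -/
def IsNorm {X : Type*} [AddCommGroup X] [Module ℝ X] (N : X → ℝ) : Prop :=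
  (∀ x, N x = 0 ↔ x = 0) ∧ (∀ (a : ℝ) (x : X), N (a • x) = |a| * N x) ∧
    ∀ x y, N (x + y) ≤ N x + N y

open Filter Topology

theorem aux_exists_far {X : Type*} [NormedAddCommGroup X] [NormedSpace ℝ X]
    (Y F : Submodule ℝ X) (hY : ¬ FiniteDimensional ℝ Y) (hF : FiniteDimensional ℝ F) {R : ℝ}
    (hR : ∀ (E : Submodule ℝ X), ¬ FiniteDimensional ℝ E → ∃ f : ℕ → E, (∀ n, ‖f n‖ ≤ R) ∧
      Pairwise fun m n => 1 ≤ ‖f m - f n‖) :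
    ∃ y ∈ Y, ‖y‖ ≤ R ∧ ∀ a ∈ F, 1 / 4 ≤ ‖y - a‖ := by
  obtain ⟨f, hf, hsep⟩ := hR Y hY
  by_contra! hcon
  have h1 : ∀ n, ∃ a : F, ‖(f n : X) - a‖ < 1 / 4 := by
    intro n
    obtain ⟨a, ha, h⟩ := hcon (f n) (f n).2 (hf n)
    exact ⟨⟨a, ha⟩, h⟩
  choose a ha using h1
  have hb : ∀ n, a n ∈ Metric.closedBall (0 : F) (R + 1 / 4) := by
    intro n
    rw [mem_closedBall_zero_iff, Submodule.coe_norm]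
    have h2 := norm_sub_norm_le (a n : X) (f n)
    rw [norm_sub_rev] at h2
    have h3 : ‖(f n : X)‖ ≤ R := hf n
    linarith [ha n]
  have : ProperSpace F := FiniteDimensional.proper ℝ F
  obtain ⟨l, -, φ, hφ, hl⟩ := tendsto_subseq_of_bounded Metric.isBounded_closedBall hb
  have hc := hl.cauchySeq
  rw [Metric.cauchySeq_iff] at hc
  obtain ⟨M, hM⟩ := hc (1 / 4) (by norm_num)
  have h4 := hM M le_rfl (M + 1) (Nat.le_succ _)
  rw [dist_eq_norm, Submodule.coe_norm] at h4
  have h5 : (1 : ℝ) ≤ ‖((f (φ M) : X) - f (φ (M + 1)))‖ :=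
    hsep (hφ (Nat.lt_succ_self M)).ne
  have h6 := ha (φ M)
  have h7 := ha (φ (M + 1))
  have h8 : (f (φ M) : X) - f (φ (M + 1)) = ((f (φ M) : X) - a (φ M)) +
      ((a (φ M) : X) - a (φ (M+1))) - ((f (φ (M+1)) : X) - a (φ (M+1))) := by abel
  have h9 := norm_sub_le (((f (φ M) : X) - a (φ M)) +
      ((a (φ M) : X) - a (φ (M+1)))) ((f (φ (M+1)) : X) - a (φ (M+1)))
  have h10 := norm_add_le ((f (φ M) : X) - a (φ M)) ((a (φ M) : X) - a (φ (M+1)))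
  rw [← h8] at h9
  have h11 : ‖(a (φ M) : X) - a (φ (M+1))‖ < 1 / 4 := h4
  linarith

theorem aux_functional {X : Type*} [NormedAddCommGroup X] [NormedSpace ℝ X]
    (F : Submodule ℝ X) (hF : FiniteDimensional ℝ F) (y : X) (hy : ∀ a ∈ F, 1 / 4 ≤ ‖y - a‖) :
    ∃ g : X →L[ℝ] ℝ, (∀ x, |g x| ≤ 4 * ‖x‖) ∧ g y = 1 ∧ ∀ a ∈ F, g a = 0 := by
  have hcl : IsClosed (F : Set X) := F.closed_of_finiteDimensional
  have hq : (1 : ℝ) / 4 ≤ ‖(Submodule.Quotient.mk y : X ⧸ F)‖ := by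
    by_contra! h
    obtain ⟨m, hm, hm'⟩ := (QuotientAddGroup.norm_lt_iff (S := F.toAddSubgroup)).1 h
    have h2 : y - m ∈ F := by
      have := (Submodule.Quotient.eq F).1 (hm : (Submodule.Quotient.mk m : X ⧸ F) = _)
      rw [← neg_sub]
      exact F.neg_mem this
    have := hy _ h2
    rw [sub_sub_cancel] at this
    linarith
  obtain ⟨g, hg, hgy⟩ := exists_dual_vector'' ℝ (Submodule.Quotient.mk y : X ⧸ F)
  have hgy' : g (Submodule.Quotient.mk y : X ⧸ F) = ‖(Submodule.Quotient.mk y : X ⧸ F)‖ := hgy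
  set q : ℝ := ‖(Submodule.Quotient.mk y : X ⧸ F)‖ with hqdef
  have hq0 : 0 < q := by linarith
  refine ⟨q⁻¹ • (g.comp F.mkQL), ?_, ?_, ?_⟩
  · intro x
    have h1 : |g (Submodule.Quotient.mk x : X ⧸ F)| ≤ ‖x‖ := by
      have h2 := g.le_of_opNorm_le hg (Submodule.Quotient.mk x : X ⧸ F)
      have h3 : ‖(Submodule.Quotient.mk x : X ⧸ F)‖ ≤ ‖x‖ := Submodule.Quotient.norm_mk_le F x
      rw [Real.norm_eq_abs] at h2
      linarith
    have h4 : q⁻¹ ≤ 4 := by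
      rw [inv_le_comm₀ hq0 (by norm_num)]
      linarith
    change |q⁻¹ * g (Submodule.Quotient.mk x : X ⧸ F)| ≤ _
    rw [abs_mul, abs_of_pos (inv_pos.2 hq0)]
    gcongr
  · change q⁻¹ * g (Submodule.Quotient.mk y : X ⧸ F) = 1
    rw [hgy']
    exact inv_mul_cancel₀ hq0.ne'
  · intro a ha
    change q⁻¹ * g (Submodule.Quotient.mk a : X ⧸ F) = 0
    rw [(Submodule.Quotient.mk_eq_zero F).2 ha]
    simp

theorem aux_biorth (X : Type*) [NormedAddCommGroup X] [NormedSpace ℝ X]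
    (hX : ¬ FiniteDimensional ℝ X) :
    ∃ (R : ℝ) (x : ℕ → X) (h : ℕ → (X →L[ℝ] ℝ)), (∀ n, ‖x n‖ ≤ R) ∧
      (∀ n z, |h n z| ≤ 4 * ‖z‖) ∧ (∀ n, h n (x n) = 1) ∧ ∀ m n, m ≠ n → h m (x n) = 0 := by
  obtain ⟨c, hc⟩ := NormedField.exists_one_lt_norm ℝ
  obtain ⟨R, hR⟩ := exists_gt ‖c‖
  have hRR : ∀ (E : Submodule ℝ X), ¬ FiniteDimensional ℝ E → ∃ f : ℕ → E, (∀ n, ‖f n‖ ≤ R) ∧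
      Pairwise fun m n => 1 ≤ ‖f m - f n‖ := fun E hE =>
    exists_seq_norm_le_one_le_norm_sub' hc hR hE
  obtain ⟨s, hs, hr⟩ := exists_seq_of_forall_finset_exists
    (fun p : X × (X →L[ℝ] ℝ) => ‖p.1‖ ≤ R ∧ (∀ z, |p.2 z| ≤ 4 * ‖z‖) ∧ p.2 p.1 = 1)
    (fun p q => p.2 q.1 = 0 ∧ q.2 p.1 = 0) (by
      intro s hs
      classical
      let F : Submodule ℝ X := Submodule.span ℝ (s.image Prod.fst : Finset X)
      have hF : FiniteDimensional ℝ F := FiniteDimensional.span_finset ℝ _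
      let L : X →ₗ[ℝ] (s → ℝ) := LinearMap.pi fun p => (p.1.2 : X →ₗ[ℝ] ℝ)
      have hY : ¬ FiniteDimensional ℝ (LinearMap.ker L) := by
        intro hk
        apply hX
        have : FiniteDimensional ℝ (X ⧸ LinearMap.ker L) :=
          LinearEquiv.finiteDimensional L.quotKerEquivRange.symm
        exact Module.Finite.of_submodule_quotient (LinearMap.ker L)
      obtain ⟨y, hyY, hyR, hyF⟩ := aux_exists_far (LinearMap.ker L) F hY hF hRR
      obtain ⟨g, hg, hgy, hgF⟩ := aux_functional F hF y hyF
      refine ⟨(y, g), ⟨hyR, hg, hgy⟩, fun p hp => ⟨?_, ?_⟩⟩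
      · exact congrFun (LinearMap.mem_ker.1 hyY) ⟨p, hp⟩
      · apply hgF
        apply Submodule.subset_span
        exact Finset.mem_coe.2 (Finset.mem_image_of_mem _ hp))
  refine ⟨R, fun n => (s n).1, fun n => (s n).2, fun n => (hs n).1, fun n => (hs n).2.1,
    fun n => (hs n).2.2, fun m n hmn => ?_⟩
  rcases lt_or_gt_of_ne hmn with h | h
  · exact (hr _ _ h).1
  · exact (hr _ _ h).2

theorem aux_ramsey (d : ℕ → ℕ → ℝ) (C : ℝ) (hd : ∀ n m, d n m ∈ Set.Icc 0 C) {δ : ℝ}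
    (hδ : 0 < δ) : ∃ (lam : ℝ) (φ : ℕ → ℕ), 0 ≤ lam ∧ StrictMono φ ∧
      ∀ m n, m < n → |d (φ m) (φ n) - lam| < δ := by
  let U : Ultrafilter ℕ := hyperfilter ℕ
  have key : ∀ u : ℕ → ℝ, (∀ n, u n ∈ Set.Icc 0 C) →
      ∃ l ∈ Set.Icc 0 C, Tendsto u U (𝓝 l) := by
    intro u hu
    obtain ⟨l, hl, h⟩ := (isCompact_Icc (a := (0 : ℝ)) (b := C)).ultrafilter_le_nhds (U.map u)
      (by
        rw [le_principal_iff]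
        exact Filter.mem_map.2 (Filter.univ_mem' hu))
    exact ⟨l, hl, h⟩
  choose e he het using fun n => key (d n) (hd n)
  obtain ⟨lam, hlam, hl⟩ := key e he
  have hP : ∀ᶠ n in (U : Filter ℕ), ∀ᶠ m in (U : Filter ℕ), |d n m - lam| < δ ∧ n < m := by
    filter_upwards [Metric.tendsto_nhds.1 hl (δ / 2) (by linarith)] with n hn
    have hgt : ∀ᶠ m in (U : Filter ℕ), n < m :=
      Nat.hyperfilter_le_atTop (eventually_gt_atTop n)
    filter_upwards [Metric.tendsto_nhds.1 (het n) (δ / 2) (by linarith), hgt] with m hm hnm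
    refine ⟨?_, hnm⟩
    rw [Real.dist_eq] at hn hm
    have := abs_sub_le (d n m) (e n) lam
    linarith
  obtain ⟨φ, -, hφ⟩ := exists_seq_of_forall_finset_exists
    (fun n => ∀ᶠ m in (U : Filter ℕ), |d n m - lam| < δ ∧ n < m)
    (fun n m => |d n m - lam| < δ ∧ n < m) (by
      intro s hs
      have h1 := (Filter.eventually_all_finset s).2 hs
      exact (hP.and h1).exists)
  exact ⟨lam, φ, hlam.1, fun m n h => (hφ m n h).2, fun m n h => (hφ m n h).1⟩

theorem aux_norm {X : Type*} [NormedAddCommGroup X] [NormedSpace ℝ X] {ι : Type*} [Nonempty ι]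
    (T : ι → (X →L[ℝ] ℝ)) (C : ℝ) (hT : ∀ i x, |T i x| ≤ C * ‖x‖) :
    IsNorm (fun x => max ‖x‖ (⨆ i, |T i x|)) := by
  have hb : ∀ x, BddAbove (Set.range fun i => |T i x|) := fun x =>
    ⟨C * ‖x‖, by rintro _ ⟨i, rfl⟩; exact hT i x⟩
  refine ⟨fun x => ⟨fun h => ?_, ?_⟩, fun a x => ?_, fun x y => ?_⟩
  · have : ‖x‖ ≤ 0 := h ▸ le_max_left _ _
    exact norm_le_zero_iff.1 this
  · rintro rfl
    simp
  · simp only [map_smul, norm_smul, smul_eq_mul, abs_mul, Real.norm_eq_abs]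
    rw [← Real.mul_iSup_of_nonneg (abs_nonneg a), mul_max_of_nonneg _ _ (abs_nonneg a)]
  · apply max_le
    · exact (norm_add_le x y).trans (add_le_add (le_max_left _ _) (le_max_left _ _))
    · apply ciSup_le
      intro i
      rw [map_add]
      exact (abs_add_le _ _).trans (add_le_add ((le_ciSup (hb x) i).trans (le_max_right _ _))
        ((le_ciSup (hb y) i).trans (le_max_right _ _)))

/-- **Theorem 1.** Every infinite dimensional real Banach space admits, for every `ε > 0`,
an equivalent norm `|||·|||` at Banach–Mazur distance at most `1 + ε` from the original norm
(witnessed by the identity: `a * |||x||| ≤ ‖x‖ ≤ b * |||x|||` with `b / a ≤ 1 + ε`)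
such that `X` with the new norm admits an infinite equilateral set. -/
theorem renorm_close_with_infinite_equilateral
    (X : Type*) [NormedAddCommGroup X] [NormedSpace ℝ X] [CompleteSpace X]
    (hX : ¬ FiniteDimensional ℝ X) {ε : ℝ} (hε : 0 < ε) :
    ∃ N : X → ℝ, IsNorm N ∧
      (∃ a b : ℝ, 0 < a ∧ 0 < b ∧ (∀ x, a * N x ≤ ‖x‖ ∧ ‖x‖ ≤ b * N x) ∧ b / a ≤ 1 + ε) ∧
      (∃ S : Set X, S.Infinite ∧ ∃ lam : ℝ, 0 < lam ∧
        ∀ x ∈ S, ∀ y ∈ S, x ≠ y → N (x - y) = lam) := by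
  obtain ⟨R, x₀, h₀, hxR, hh, hh1, hh0⟩ := aux_biorth X hX
  obtain ⟨δ, hδ⟩ : ∃ δ, δ = ε / 20 := ⟨_, rfl⟩
  have hδ0 : 0 < δ := by rw [hδ]; positivity
  obtain ⟨lam, φ, hlam, hφ, hd⟩ := aux_ramsey (fun n m => ‖x₀ n - x₀ m‖) (R + R)
    (fun n m => ⟨norm_nonneg _, (norm_sub_le _ _).trans (add_le_add (hxR n) (hxR m))⟩) hδ0
  obtain ⟨x, hx⟩ : ∃ x : ℕ → X, x = fun n => x₀ (φ n) := ⟨_, rfl⟩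
  obtain ⟨h, hhdef⟩ : ∃ h : ℕ → (X →L[ℝ] ℝ), h = fun n => h₀ (φ n) := ⟨_, rfl⟩
  have hK : ∀ n z, |h n z| ≤ 4 * ‖z‖ := by intro n z; rw [hhdef]; exact hh _ _
  have hδx : ∀ m n, h m (x n) = if m = n then 1 else 0 := by
    intro m n
    rw [hhdef, hx]
    split_ifs with e
    · rw [e]; exact hh1 _
    · exact hh0 _ _ (hφ.injective.ne e)
  have hdist : ∀ m n, m ≠ n → |‖x m - x n‖ - lam| < δ := by
    intro m n hmn
    rw [hx]
    rcases lt_or_gt_of_ne hmn with e | e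
    · exact hd _ _ e
    · simp only [norm_sub_rev (x₀ (φ m))]
      exact hd _ _ e
  have hinj : Function.Injective x := by
    intro m n e
    by_contra hmn
    have h1 := hδx m m
    have h2 := hδx m n
    rw [if_pos rfl] at h1
    rw [if_neg hmn, ← e, h1] at h2
    exact one_ne_zero h2
  have hT : ∀ p : {p : ℕ × ℕ // p.1 ≠ p.2}, ∃ T : X →L[ℝ] ℝ, (∀ z, |T z| ≤ (1 + ε) * ‖z‖) ∧
      T (x p.1.1 - x p.1.2) = lam + 4 * δ ∧
      ∀ k l, k ≠ l → |T (x k - x l)| ≤ lam + 4 * δ := by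
    rintro ⟨⟨m, n⟩, hmn⟩
    change m ≠ n at hmn
    obtain ⟨f, hf, hfx⟩ := exists_dual_vector'' ℝ (x m - x n)
    have hfx' : f (x m - x n) = ‖x m - x n‖ := hfx
    obtain ⟨c, hc⟩ : ∃ c, c = (lam + 4 * δ - ‖x m - x n‖) / 2 := ⟨_, rfl⟩
    have hmn' := abs_lt.1 (hdist m n hmn)
    have hc0 : 0 ≤ c := by rw [hc]; linarith
    have hc1 : 2 * c ≤ 5 * δ := by rw [hc]; linarith
    have hfz : ∀ z, |f z| ≤ ‖z‖ := fun z => by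
      simpa using f.le_of_opNorm_le hf z
    have hTz : ∀ z, (f + c • (h m - h n)) z = f z + c * (h m z - h n z) := fun z => rfl
    have hval : (f + c • (h m - h n)) (x m - x n) = lam + 4 * δ := by
      rw [hTz, hfx', map_sub, map_sub]
      simp only [hδx, if_true, if_neg hmn, if_neg hmn.symm]
      rw [hc]; ring
    refine ⟨f + c • (h m - h n), fun z => ?_, hval, fun k l hkl => ?_⟩
    · rw [hTz]
      have h1 := abs_add_le (f z) (c * (h m z - h n z))
      rw [abs_mul, abs_of_nonneg hc0] at h1
      have h2 := abs_sub (h m z) (h n z)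
      have h3 : c * |h m z - h n z| ≤ c * (8 * ‖z‖) := by
        apply mul_le_mul_of_nonneg_left _ hc0
        linarith [hK m z, hK n z]
      have h4 : 2 * c * (4 * ‖z‖) ≤ 5 * δ * (4 * ‖z‖) :=
        mul_le_mul_of_nonneg_right hc1 (by positivity)
      have h5 : 5 * δ * (4 * ‖z‖) = ε * ‖z‖ := by rw [hδ]; ring
      linarith [hfz z]
    · by_cases e1 : k = m ∧ l = n
      · rw [e1.1, e1.2, hval, abs_of_nonneg (by linarith)]
      by_cases e2 : k = n ∧ l = m
      · rw [e2.1, e2.2, ← neg_sub (x m) (x n), map_neg, abs_neg, hval, abs_of_nonneg (by linarith)]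
      have hu : |h m (x k - x l) - h n (x k - x l)| ≤ 1 := by
        rw [map_sub, map_sub]
        simp only [hδx]
        split_ifs <;> first | (exfalso; omega) | norm_num
      rw [hTz]
      have h1 := abs_add_le (f (x k - x l)) (c * (h m (x k - x l) - h n (x k - x l)))
      rw [abs_mul, abs_of_nonneg hc0] at h1
      have h3 := mul_le_mul_of_nonneg_left hu hc0
      have h4 := abs_lt.1 (hdist k l hkl)
      linarith [hfz (x k - x l)]
  choose T hTb hTe hTle using hT
  have : Nonempty {p : ℕ × ℕ // p.1 ≠ p.2} := ⟨⟨(0, 1), by norm_num⟩⟩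
  have hε1 : 0 < 1 + ε := by linarith
  refine ⟨fun z => max ‖z‖ (⨆ p, |T p z|), aux_norm T (1 + ε) hTb,
    ⟨(1 + ε)⁻¹, 1, inv_pos.2 hε1, one_pos, fun z => ⟨?_, ?_⟩, ?_⟩,
    Set.range x, Set.infinite_range_of_injective hinj, lam + 4 * δ, by linarith, ?_⟩
  · rw [inv_mul_le_iff₀ hε1]
    apply max_le
    · nlinarith [norm_nonneg z]
    · exact ciSup_le fun p => hTb p z
  · rw [one_mul]; exact le_max_left _ _
  · simp
  · rintro _ ⟨k, rfl⟩ _ ⟨l, rfl⟩ hne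
    have hkl : k ≠ l := fun e => hne (by rw [e])
    apply le_antisymm
    · apply max_le
      · linarith [(abs_lt.1 (hdist k l hkl)).2]
      · exact ciSup_le fun p => hTle p k l hkl
    · refine le_trans ?_ (le_max_right _ _)
      have hb : BddAbove (Set.range fun p => |T p (x k - x l)|) :=
        ⟨(1 + ε) * ‖x k - x l‖, by rintro _ ⟨i, rfl⟩; exact hTb i _⟩
      refine le_trans ?_ (le_ciSup hb ⟨(k, l), hkl⟩)
      change _ ≤ |T ⟨(k, l), hkl⟩ (x k - x l)|
      have h5 : T ⟨(k, l), hkl⟩ (x k - x l) = lam + 4 * δ := hTe ⟨(k, l), hkl⟩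
      rw [h5]
      exact le_abs_self _
end

section
/- Every real Banach space X containing a closed subspace linearly isomorphic to c₀ admits an infinite equilateral set; i.e., there exist λ > 0 and an infinite set S ⊆ X with ‖x − y‖ = λ for all distinct x, y ∈ S. -/
open scoped ZeroAtInfty

/-- James-type lemma: normalized blocks. -/
lemma james_aux {X : Type*} [NormedAddCommGroup X] [NormedSpace ℝ X]
    (T : (ℕ →₀ ℝ) →ₗ[ℝ] X) (C m : ℝ) (hmp : 0 < m)
    (hC : ∀ a : ℕ →₀ ℝ, (∀ k, |a k| ≤ 1) → ‖T a‖ ≤ C)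
    (hm : ∀ n, m ≤ ‖T (Finsupp.single n 1)‖) (η : ℝ) (hη : 0 < η) (hη1 : η < 1) :
    ∃ x : ℕ → X, (∀ k, 1 - η ≤ ‖x k‖) ∧
      ∀ (n : ℕ) (a : ℕ → ℝ), (∀ k, |a k| ≤ 1) → ‖∑ k ∈ Finset.range n, a k • x k‖ ≤ 1 := by
  let A : ℕ → Set ℝ := fun n =>
    {r | ∃ a : ℕ →₀ ℝ, (∀ k, |a k| ≤ 1) ∧ (∀ k, k < n → a k = 0) ∧ r = ‖T a‖}
  let M : ℕ → ℝ := fun n => sSup (A n)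
  have hbdd : ∀ n, BddAbove (A n) := by
    intro n
    refine ⟨C, ?_⟩
    rintro r ⟨a, h1, -, rfl⟩
    exact hC a h1
  have hmem : ∀ n, ‖T (Finsupp.single n 1)‖ ∈ A n := by
    intro n
    refine ⟨_, ?_, ?_, rfl⟩
    · intro k
      by_cases h : n = k <;> simp [Finsupp.single_apply, h]
    · intro k hk
      have : n ≠ k := by omega
      simp [Finsupp.single_apply, this]
  have hMm : ∀ n, m ≤ M n := fun n => (hm n).trans (le_csSup (hbdd n) (hmem n))
  have hIbdd : BddBelow (Set.range M) := ⟨m, by rintro _ ⟨n, rfl⟩; exact hMm n⟩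
  have hI : m ≤ ⨅ n, M n := le_ciInf hMm
  set I := ⨅ n, M n with hIdef
  have hIpos : 0 < I := hmp.trans_le hI
  -- choose N
  have hN : ∃ N, M N * (1 - η) < I * (1 - η / 2) := by
    have h1 : I < I * (1 - η / 2) / (1 - η) := by
      rw [lt_div_iff₀ (by linarith)]
      nlinarith
    obtain ⟨N, hN⟩ := exists_lt_of_ciInf_lt (f := M) h1
    refine ⟨N, ?_⟩
    rwa [lt_div_iff₀ (by linarith)] at hN
  obtain ⟨N, hN⟩ := hN
  have hMN : 0 < M N := hmp.trans_le (hMm N)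
  have hf : ∀ n, ∃ a : ℕ →₀ ℝ, (∀ k, |a k| ≤ 1) ∧ (∀ k, k < n → a k = 0) ∧
      M N * (1 - η) ≤ ‖T a‖ := by
    intro n
    have h1 : M N * (1 - η) < M n := by
      have : I ≤ M n := ciInf_le hIbdd n
      nlinarith
    obtain ⟨r, ⟨a, h2, h3, rfl⟩, h4⟩ := exists_lt_of_lt_csSup ⟨_, hmem n⟩ h1
    exact ⟨a, h2, h3, h4.le⟩
  choose f hf1 hf2 hf3 using hf
  let nx : ℕ → ℕ := fun n => max n ((f n).support.sup id + 1)
  let s : ℕ → ℕ := fun k => nx^[k] N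
  have hs : ∀ k, s (k+1) = nx (s k) := fun k => Function.iterate_succ_apply' _ _ _
  have hmono : Monotone s := monotone_nat_of_le_succ (fun k => by
    rw [hs]; exact le_max_left _ _)
  have hsN : ∀ k, N ≤ s k := fun k => hmono (Nat.zero_le k)
  let b : ℕ → (ℕ →₀ ℝ) := fun k => f (s k)
  have hb : ∀ k i, b k i ≠ 0 → s k ≤ i ∧ i < s (k+1) := by
    intro k i h
    constructor
    · by_contra h'
      exact h (hf2 _ _ (not_le.1 h'))
    · rw [hs]
      have : i ≤ (f (s k)).support.sup id :=
        Finset.le_sup (f := id) (Finsupp.mem_support_iff.2 h)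
      exact lt_of_lt_of_le (Nat.lt_succ_of_le this) (le_max_right _ _)
  have huniq : ∀ k l i, b k i ≠ 0 → b l i ≠ 0 → k = l := by
    intro k l i h1 h2
    have h1 := hb _ _ h1
    have h2 := hb _ _ h2
    by_contra hne
    rcases Nat.lt_or_gt_of_ne hne with h | h
    · have : s (k+1) ≤ s l := hmono h
      omega
    · have : s (l+1) ≤ s k := hmono h
      omega
  refine ⟨fun k => (M N)⁻¹ • T (b k), ?_, ?_⟩
  · intro k
    rw [norm_smul, norm_inv, Real.norm_of_nonneg hMN.le, inv_mul_eq_div, le_div_iff₀ hMN]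
    have := hf3 (s k)
    show _ ≤ ‖T (f (s k))‖
    linarith
  · intro n a ha
    have hsum : ∑ k ∈ Finset.range n, a k • ((M N)⁻¹ • T (b k))
        = (M N)⁻¹ • T (∑ k ∈ Finset.range n, a k • b k) := by
      rw [map_sum, Finset.smul_sum]
      refine Finset.sum_congr rfl fun k _ => ?_
      rw [map_smul, smul_comm]
    rw [hsum, norm_smul, norm_inv, Real.norm_of_nonneg hMN.le, inv_mul_eq_div, div_le_one hMN]
    refine le_csSup (hbdd N) ⟨_, ?_, ?_, rfl⟩
    · intro i
      rw [Finsupp.finset_sum_apply]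
      simp only [Finsupp.smul_apply, smul_eq_mul]
      by_cases h : ∃ k ∈ Finset.range n, b k i ≠ 0
      · obtain ⟨k, hk, hki⟩ := h
        rw [Finset.sum_eq_single_of_mem k hk]
        · rw [abs_mul]
          exact mul_le_one₀ (ha k) (abs_nonneg _) (hf1 _ _)
        · intro l _ hl
          have : b l i = 0 := by
            by_contra h
            exact hl (huniq _ _ _ h hki)
          rw [this, mul_zero]
      · push Not at h
        rw [Finset.sum_eq_zero (fun k hk => by rw [h k hk, mul_zero])]
        simp
    · intro i hi
      rw [Finsupp.finset_sum_apply]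
      refine Finset.sum_eq_zero fun k _ => ?_
      have : b k i = 0 := hf2 _ _ (lt_of_lt_of_le hi (hsN k))
      simp [this]

/-- Uniform contraction on a cube has a fixed point (elementary version). -/
lemma fixed_aux (F : (ℕ → ℕ → ℝ) → (ℕ → ℕ → ℝ))
    (hF : ∀ e, (∀ i j, 0 ≤ e i j ∧ e i j ≤ 1/8) → ∀ i j, 0 ≤ F e i j ∧ F e i j ≤ 1/8)
    (hc : ∀ e e' : ℕ → ℕ → ℝ, (∀ i j, 0 ≤ e i j ∧ e i j ≤ 1/8) →
      (∀ i j, 0 ≤ e' i j ∧ e' i j ≤ 1/8) → ∀ τ : ℝ, 0 < τ → (∀ i j, |e i j - e' i j| ≤ τ) →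
      ∀ i j, |F e i j - F e' i j| ≤ τ / 2) :
    ∃ e : ℕ → ℕ → ℝ, (∀ i j, 0 ≤ e i j ∧ e i j ≤ 1/8) ∧ F e = e := by
  let g : ℕ → ℕ → ℕ → ℝ := fun n => F^[n] (fun _ _ => 0)
  have hg : ∀ n, g (n+1) = F (g n) := fun n => Function.iterate_succ_apply' _ _ _
  have hg1 : ∀ n i j, 0 ≤ g n i j ∧ g n i j ≤ 1/8 := by
    intro n
    induction n with
    | zero => intro i j; simp [g]
    | succ n ih => rw [hg]; exact hF _ ih
  have hd : ∀ n i j, |g n i j - g (n+1) i j| ≤ 1 / 2 / 2^n := by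
    intro n
    induction n with
    | zero =>
      intro i j
      have h1 := hg1 0 i j
      have h2 := hg1 1 i j
      rw [abs_le]; norm_num; constructor <;> linarith
    | succ n ih =>
      intro i j
      have := hc _ _ (hg1 n) (hg1 (n+1)) _ (by positivity) ih i j
      rw [hg (n+1), hg n] at *
      refine this.trans (le_of_eq ?_)
      rw [pow_succ]; field_simp
  have hlim : ∀ i j, ∃ l, Filter.Tendsto (fun n => g n i j) Filter.atTop (nhds l) := by
    intro i j
    apply cauchySeq_tendsto_of_complete
    exact cauchySeq_of_le_geometric_two (C := 1) (fun n => by rw [Real.dist_eq]; exact hd n i j)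
  choose e he using hlim
  have he1 : ∀ i j, 0 ≤ e i j ∧ e i j ≤ 1/8 := fun i j =>
    ⟨ge_of_tendsto' (he i j) (fun n => (hg1 n i j).1),
      le_of_tendsto' (he i j) (fun n => (hg1 n i j).2)⟩
  refine ⟨e, he1, ?_⟩
  have hclose : ∀ n i j, |g n i j - e i j| ≤ 1 / 2^n := by
    intro n i j
    rw [← Real.dist_eq]
    exact dist_le_of_le_geometric_two_of_tendsto
      (fun n => by rw [Real.dist_eq]; exact hd n i j) (he i j) n
  funext i j
  have h1 : Filter.Tendsto (fun n => g (n+1) i j) Filter.atTop (nhds (e i j)) :=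
    (he i j).comp (Filter.tendsto_add_atTop_nat 1)
  have h2 : Filter.Tendsto (fun n => g (n+1) i j) Filter.atTop (nhds (F e i j)) := by
    rw [tendsto_iff_dist_tendsto_zero]
    refine squeeze_zero (fun _ => dist_nonneg) (g := fun n : ℕ => (1/2:ℝ)^n) ?_
      (tendsto_pow_atTop_nhds_zero_of_lt_one (by norm_num) (by norm_num))
    intro n
    rw [Real.dist_eq, hg]
    refine (hc _ _ (hg1 n) he1 _ (by positivity) (hclose n) i j).trans ?_
    rw [one_div_pow]
    have : (0:ℝ) < 1 / 2^n := by positivity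
    linarith
  exact tendsto_nhds_unique h2 h1

/-- Coefficients of the points. -/
noncomputable def eqCoef (e : ℕ → ℕ → ℝ) (j k : ℕ) : ℝ :=
  if k < j then 1/2 + e k j else if k = j then -1/2 else 0

lemma eqCoef_diff_self (e : ℕ → ℕ → ℝ) {i j : ℕ} (h : i < j) :
    eqCoef e j i - eqCoef e i i = 1 + e i j := by
  simp [eqCoef, h]; ring

lemma eqCoef_diff_other (e : ℕ → ℕ → ℝ) (he : ∀ i j, 0 ≤ e i j ∧ e i j ≤ 1/8)
    {i j : ℕ} (h : i < j) (k : ℕ) (hk : k ≠ i) :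
    |eqCoef e j k - eqCoef e i k| ≤ 5/8 := by
  have h1 := he k j
  have h2 := he k i
  unfold eqCoef
  rw [abs_le]
  split_ifs <;> first | omega | (constructor <;> linarith)

lemma eqCoef_diff_diff (e e' : ℕ → ℕ → ℝ) (τ : ℝ) (hτ : 0 < τ)
    (he : ∀ i j, |e i j - e' i j| ≤ τ) (i j k : ℕ) :
    |(eqCoef e j k - eqCoef e i k) - (eqCoef e' j k - eqCoef e' i k)| ≤ 2 * τ := by
  have h1 := abs_le.1 (he k j)
  have h2 := abs_le.1 (he k i)
  unfold eqCoef
  rw [abs_le]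
  split_ifs <;> (constructor <;> linarith)

lemma equilateral_aux {X : Type*} [NormedAddCommGroup X] [NormedSpace ℝ X]
    (x : ℕ → X) (hx : ∀ k, 1 - 1/200 ≤ ‖x k‖)
    (hs : ∀ (n : ℕ) (a : ℕ → ℝ), (∀ k, |a k| ≤ 1) →
      ‖∑ k ∈ Finset.range n, a k • x k‖ ≤ 1) :
    ∃ S : Set X, S.Infinite ∧ ∃ lam : ℝ, 0 < lam ∧
      ∀ x ∈ S, ∀ y ∈ S, x ≠ y → ‖x - y‖ = lam := by
  let T : ℕ → (ℕ → ℝ) → X := fun n a => ∑ k ∈ Finset.range n, a k • x k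
  have hup : ∀ n a (R : ℝ), 0 < R → (∀ k, |a k| ≤ R) → ‖T n a‖ ≤ R := by
    intro n a R hR ha
    have h := hs n (fun k => R⁻¹ * a k) (fun k => by
      rw [abs_mul, abs_inv, abs_of_pos hR, inv_mul_eq_div, div_le_one hR]; exact ha k)
    simp only [mul_smul, ← Finset.smul_sum] at h
    rw [norm_smul, norm_inv, Real.norm_of_nonneg hR.le, inv_mul_eq_div, div_le_one hR] at h
    exact h
  have hlow : ∀ n a i, i < n → 0 < a i → (∀ k, |a k| ≤ a i) →
      a i * (1 - 1/100) ≤ ‖T n a‖ := by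
    intro n a i hi hpos ha
    let a' : ℕ → ℝ := fun k => (if k = i then 2 * a i else 0) - a k
    have h1 : ‖T n a'‖ ≤ a i := by
      refine hup n a' _ hpos fun k => ?_
      by_cases hk : k = i
      · subst hk
        simp only [a', if_true]
        rw [abs_le]; constructor <;> linarith
      · simp only [a', hk, if_false, zero_sub, abs_neg]
        exact ha k
    have h2 : T n a' + T n a = (2 * a i) • x i := by
      simp only [T, ← Finset.sum_add_distrib, ← add_smul, a', sub_add_cancel]
      simp [ite_smul, hi]
    have h3 : ‖(2 * a i) • x i‖ ≤ ‖T n a'‖ + ‖T n a‖ := by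
      rw [← h2]; exact norm_add_le _ _
    rw [norm_smul, Real.norm_of_nonneg (by linarith)] at h3
    have := hx i
    nlinarith
  -- one-sided Lipschitz estimate
  have hlip : ∀ n u u' i, i < n → (1 ≤ u' i ∧ u' i ≤ 9/8) → (∀ k, k ≠ i → |u' k| ≤ 5/8) →
      ∀ σ : ℝ, 0 < σ → (∀ k, |u' k - u k| ≤ σ) →
      (‖T n u'‖ - u' i) - (‖T n u‖ - u i) ≤ σ / 4 := by
    intro n u u' i hi hu1 hu2 σ hσ hd
    let w : ℕ → ℝ := fun k => σ * u' k + 1/8 * (u' k - u k)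
    have hdi := abs_le.1 (hd i)
    have hwi : 7/8 * σ ≤ w i := by simp only [w]; nlinarith
    have hw : ∀ k, |w k| ≤ w i := by
      intro k
      by_cases hk : k = i
      · subst hk
        rw [abs_of_nonneg]; linarith
      · refine le_trans ?_ hwi
        have h1 := abs_le.1 (hu2 k hk)
        have h2 := abs_le.1 (hd k)
        simp only [w]
        rw [abs_le]; constructor <;> nlinarith
    have hTw : ‖T n w‖ ≤ w i := hup n w _ (by linarith) hw
    have heq : (σ + 1/8) • T n u' = (1/8 : ℝ) • T n u + T n w := by
      simp only [T, Finset.smul_sum, ← Finset.sum_add_distrib, smul_smul, ← add_smul]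
      refine Finset.sum_congr rfl fun k _ => ?_
      congr 1
      simp only [w]; ring
    have hn : (σ + 1/8) * ‖T n u'‖ ≤ 1/8 * ‖T n u‖ + ‖T n w‖ := by
      have h := norm_add_le ((1/8 : ℝ) • T n u) (T n w)
      rw [← heq, norm_smul, norm_smul, Real.norm_of_nonneg (by linarith),
        Real.norm_of_nonneg (by norm_num)] at h
      exact h
    have hl := hlow n u' i hi (by linarith) (by
      intro k
      by_cases hk : k = i
      · subst hk; rw [abs_of_nonneg]; linarith
      · exact (hu2 k hk).trans (by linarith))
    simp only [w] at hTw hn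
    have h5 : u' i - ‖T n u'‖ ≤ 1/32 := by linarith
    nlinarith
  let D : (ℕ → ℕ → ℝ) → ℕ → ℕ → ℕ → ℝ := fun e i j k => eqCoef e j k - eqCoef e i k
  let F : (ℕ → ℕ → ℝ) → (ℕ → ℕ → ℝ) := fun e i j =>
    if i < j then 1 + e i j - ‖T (j+1) (D e i j)‖ else 0
  obtain ⟨e, he, hfix⟩ := fixed_aux F (by
    intro e he i j
    by_cases hij : i < j
    · simp only [F, hij, if_true]
      have hi : D e i j i = 1 + e i j := eqCoef_diff_self e hij
      have h0 := he i j
      have hk : ∀ k, |D e i j k| ≤ D e i j i := by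
        intro k
        by_cases hk : k = i
        · subst hk; rw [abs_of_nonneg]; linarith
        · exact (eqCoef_diff_other e he hij k hk).trans (by linarith)
      have h1 := hup (j+1) _ _ (by linarith) hk
      have h2 := hlow (j+1) _ i (by omega) (by linarith) hk
      rw [hi] at h1 h2
      constructor <;> linarith
    · simp only [F, hij, if_false]; norm_num) (by
    intro e e' he he' τ hτ hd i j
    by_cases hij : i < j
    · simp only [F, hij, if_true]
      have hi : D e i j i = 1 + e i j := eqCoef_diff_self e hij
      have hi' : D e' i j i = 1 + e' i j := eqCoef_diff_self e' hij
      have h0 := he i j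
      have h0' := he' i j
      have h1 := hlip (j+1) (D e i j) (D e' i j) i (by omega)
        (by rw [hi']; constructor <;> linarith) (eqCoef_diff_other e' he' hij) (2 * τ)
        (by linarith) (fun k => by
          rw [abs_sub_comm]; exact eqCoef_diff_diff e e' τ hτ hd i j k)
      have h2 := hlip (j+1) (D e' i j) (D e i j) i (by omega)
        (by rw [hi]; constructor <;> linarith) (eqCoef_diff_other e he hij) (2 * τ)
        (by linarith) (fun k => eqCoef_diff_diff e e' τ hτ hd i j k)
      rw [hi, hi'] at h1 h2
      rw [abs_le]; constructor <;> linarith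
    · simp only [F, hij, if_false]; simp; linarith)
  let p : ℕ → X := fun j => T (j+1) (eqCoef e j)
  have hp : ∀ i j, i < j → ‖p j - p i‖ = 1 := by
    intro i j hij
    have h1 : p i = T (j+1) (eqCoef e i) := by
      refine Finset.sum_subset (Finset.range_mono (by omega)) ?_
      intro k _ hk
      have hk : ¬ k < i + 1 := by simpa using hk
      have h1 : ¬ k < i := by omega
      have h2 : ¬ k = i := by omega
      simp [eqCoef, h1, h2]
    have h2 : p j - p i = T (j+1) (D e i j) := by
      rw [h1]
      simp only [p, T, D, sub_smul, Finset.sum_sub_distrib]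
    have h3 := congrFun (congrFun hfix i) j
    simp only [F, hij, if_true] at h3
    rw [h2]; linarith
  have hp' : ∀ i j, i ≠ j → ‖p i - p j‖ = 1 := by
    intro i j hij
    rcases Nat.lt_or_gt_of_ne hij with h | h
    · rw [norm_sub_rev]; exact hp _ _ h
    · exact hp _ _ h
  refine ⟨Set.range p, Set.infinite_range_of_injective ?_, 1, one_pos, ?_⟩
  · intro i j hij
    by_contra h
    have := hp' i j h
    rw [hij, sub_self, norm_zero] at this
    norm_num at this
  · rintro _ ⟨i, rfl⟩ _ ⟨j, rfl⟩ h
    exact hp' i j (fun heq => h (by rw [heq]))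

/-- Finitely supported sequences inside `c₀`. -/
noncomputable def finsuppToC0 : (ℕ →₀ ℝ) →ₗ[ℝ] C₀(ℕ, ℝ) where
  toFun a :=
    { toFun := a
      continuous_toFun := continuous_of_discreteTopology
      zero_at_infty' := by
        rw [Filter.cocompact_eq_cofinite]
        refine tendsto_const_nhds.congr' ?_
        have : ∀ᶠ k in Filter.cofinite, k ∉ a.support :=
          (a.support.finite_toSet).eventually_cofinite_notMem
        filter_upwards [this] with k hk
        exact (Finsupp.notMem_support_iff.1 hk).symm }
  map_add' a b := by ext; rfl
  map_smul' c a := by ext; rfl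

lemma finsuppToC0_apply (a : ℕ →₀ ℝ) (k : ℕ) : finsuppToC0 a k = a k := rfl

/-- **Theorem 2.** Every real Banach space containing a closed subspace linearly isomorphic
to `c₀` (the space `C₀(ℕ, ℝ)` of real sequences vanishing at infinity, with the sup norm)
admits an infinite equilateral set. -/
theorem infinite_equilateral_of_c0_subspace
    (X : Type*) [NormedAddCommGroup X] [NormedSpace ℝ X] [CompleteSpace X]
    (Y : Subspace ℝ X) (hY : IsClosed (Y : Set X)) (hiso : Nonempty (Y ≃L[ℝ] C₀(ℕ, ℝ))) :
    ∃ S : Set X, S.Infinite ∧ ∃ lam : ℝ, 0 < lam ∧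
      ∀ x ∈ S, ∀ y ∈ S, x ≠ y → ‖x - y‖ = lam := by
  obtain ⟨Φ⟩ := hiso
  let L : C₀(ℕ, ℝ) →L[ℝ] Y := Φ.symm
  let K : Y →L[ℝ] C₀(ℕ, ℝ) := Φ
  let T : (ℕ →₀ ℝ) →ₗ[ℝ] X := Y.subtype ∘ₗ (L : C₀(ℕ, ℝ) →ₗ[ℝ] Y) ∘ₗ finsuppToC0
  have hT : ∀ a, ‖T a‖ = ‖L (finsuppToC0 a)‖ := fun a => rfl
  obtain ⟨x, hx1, hx2⟩ := james_aux T ‖L‖ (1 / (‖K‖ + 1)) (by positivity) (by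
    intro a ha
    rw [hT]
    have h1 : ‖finsuppToC0 a‖ ≤ 1 := by
      rw [← ZeroAtInftyContinuousMap.norm_toBCF_eq_norm,
        BoundedContinuousFunction.norm_le zero_le_one]
      exact ha
    exact L.le_of_opNorm_le_of_le le_rfl h1 |>.trans (by simp)) (by
    intro n
    rw [hT, div_le_iff₀ (by positivity)]
    have h1 : 1 ≤ ‖finsuppToC0 (Finsupp.single n 1)‖ := by
      rw [← ZeroAtInftyContinuousMap.norm_toBCF_eq_norm]
      refine le_trans ?_ (BoundedContinuousFunction.norm_coe_le_norm _ n)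
      show 1 ≤ ‖(Finsupp.single n (1:ℝ)) n‖
      simp
    have h2 : K (L (finsuppToC0 (Finsupp.single n 1))) = finsuppToC0 (Finsupp.single n 1) :=
      Φ.apply_symm_apply _
    have h3 := K.le_opNorm (L (finsuppToC0 (Finsupp.single n 1)))
    rw [h2] at h3
    nlinarith [norm_nonneg (L (finsuppToC0 (Finsupp.single n 1)))]) (1/200)
    (by norm_num) (by norm_num)
  exact equilateral_aux x hx1 hx2
end

section
/- Let ‖·‖ be an equivalent norm on c₀ satisfying ‖x‖ ≤ ‖x‖_∞ ≤ (3/2)‖x‖ for all x ∈ c₀. Then (c₀, ‖·‖) admits an infinite equilateral set; in fact there exists an infinite set S ⊆ c₀ with ‖x − y‖ = 1 for all distinct x, y ∈ S. -/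
open scoped ZeroAtInfty

namespace C0Aux

lemma abs_le_norm (f : C₀(ℕ, ℝ)) (k : ℕ) : |f k| ≤ ‖f‖ := by
  rw [← ZeroAtInftyContinuousMap.norm_toBCF_eq_norm]
  exact f.toBCF.norm_coe_le_norm k

lemma norm_le_of (f : C₀(ℕ, ℝ)) (C : ℝ) (hC : 0 ≤ C) (h : ∀ k, |f k| ≤ C) : ‖f‖ ≤ C := by
  rw [← ZeroAtInftyContinuousMap.norm_toBCF_eq_norm]
  exact (BoundedContinuousFunction.norm_le hC).2 h

/-- The finitely supported vector `(x₀, …, x_{n-1}, -1, 0, …)`. -/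
noncomputable def pt (n : ℕ) (x : Fin n → ℝ) : C₀(ℕ, ℝ) where
  toFun k := if h : k < n then x ⟨k, h⟩ else if k = n then -1 else 0
  continuous_toFun := continuous_of_discreteTopology
  zero_at_infty' := by
    rw [Filter.cocompact_eq_cofinite, Nat.cofinite_eq_atTop]
    refine tendsto_const_nhds.congr' ?_
    filter_upwards [Filter.eventually_gt_atTop n] with k hk
    rw [dif_neg (by omega), if_neg (by omega)]

lemma pt_apply (n : ℕ) (x : Fin n → ℝ) (k : ℕ) :
    pt n x k = if h : k < n then x ⟨k, h⟩ else if k = n then -1 else 0 := rfl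

lemma pt_dist (n : ℕ) (x y : Fin n → ℝ) (d : ℝ) (hd : 0 ≤ d) (h : ∀ i, |x i - y i| ≤ d) :
    ‖pt n x - pt n y‖ ≤ d := by
  refine norm_le_of _ _ hd fun k => ?_
  rw [ZeroAtInftyContinuousMap.sub_apply, pt_apply, pt_apply]
  split_ifs with h1 h2
  · exact h _
  · simpa using hd
  · simpa using hd

def Good (n : ℕ) (p : C₀(ℕ, ℝ)) : Prop :=
  p n = -1 ∧ (∀ k < n, 0 ≤ p k ∧ p k ≤ 1 / 2) ∧ ∀ k, n < k → p k = 0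

lemma N_lip {N : C₀(ℕ, ℝ) → ℝ} (hN : IsNorm N) (hle : ∀ x, N x ≤ ‖x‖) (a b : C₀(ℕ, ℝ)) :
    N a ≤ N b + ‖a - b‖ := by
  have h := hN.2.2 b (a - b)
  have h2 := hle (a - b)
  rw [add_sub_cancel] at h
  linarith

lemma key {N : C₀(ℕ, ℝ) → ℝ} (hN : IsNorm N) (hle : ∀ x, N x ≤ ‖x‖)
    (u w : C₀(ℕ, ℝ)) (t d : ℝ) (hd : 0 < d) (hdt : d ≤ t) (ht : t ≤ 1 / 2) (hu : N u ≤ 1)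
    (i : ℕ) (hui : u i = 1 + t) (hwi : w i = 1 + t - d)
    (h : ∀ k, k ≠ i → (|u k| ≤ 1 / 2 ∧ |w k - u k| ≤ d) ∨ (w k = u k ∧ |u k| ≤ 1)) :
    N w ≤ 1 := by
  have ht0 : 0 < t := by linarith
  set r : C₀(ℕ, ℝ) := u + (t / d) • (w - u) with hr
  have hrn : ‖r‖ ≤ 1 := by
    refine norm_le_of _ _ zero_le_one fun k => ?_
    have e : r k = u k + (t / d) * (w k - u k) := by simp [hr]
    rw [e]
    by_cases hk : k = i
    · subst hk
      rw [hui, hwi]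
      have : 1 + t + t / d * (1 + t - d - (1 + t)) = 1 := by field_simp; ring
      rw [this]; simp
    · rcases h k hk with ⟨h1, h2⟩ | ⟨h1, h2⟩
      · calc |u k + t / d * (w k - u k)| ≤ |u k| + |t / d * (w k - u k)| := abs_add_le _ _
          _ = |u k| + t / d * |w k - u k| := by
              rw [abs_mul, abs_of_pos (div_pos ht0 hd)]
          _ ≤ 1 / 2 + t / d * d := by gcongr
          _ = 1 / 2 + t := by field_simp
          _ ≤ 1 := by linarith
      · rw [h1]; simpa using h2
  have hw : w = (1 - d / t) • u + (d / t) • r := by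
    ext k
    simp only [hr, ZeroAtInftyContinuousMap.add_apply, ZeroAtInftyContinuousMap.smul_apply,
      ZeroAtInftyContinuousMap.sub_apply, smul_eq_mul]
    field_simp
    ring
  have hl0 : 0 ≤ d / t := by positivity
  have hl1 : d / t ≤ 1 := by rw [div_le_one ht0]; exact hdt
  have h1 := hN.2.2 ((1 - d / t) • u) ((d / t) • r)
  rw [← hw, hN.2.1, hN.2.1, abs_of_nonneg hl0, abs_of_nonneg (by linarith : 0 ≤ 1 - d / t)] at h1
  have h2 : N r ≤ 1 := (hle r).trans hrn
  nlinarith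

/-- A nonexpansive self-map of the cube has a fixed point. -/
lemma fixed (n : ℕ) (G : (Fin n → ℝ) → (Fin n → ℝ))
    (hG : ∀ x i, 0 ≤ G x i ∧ G x i ≤ 1 / 2)
    (hlip : ∀ x y, (∀ i, 0 ≤ x i ∧ x i ≤ 1 / 2) → (∀ i, 0 ≤ y i ∧ y i ≤ 1 / 2) →
      dist (G x) (G y) ≤ dist x y) :
    ∃ x, (∀ i, 0 ≤ x i ∧ x i ≤ 1 / 2) ∧ G x = x := by
  set K : Set (Fin n → ℝ) := Set.Icc (fun _ => 0) (fun _ => 1 / 2) with hK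
  have memK : ∀ x, x ∈ K ↔ ∀ i, 0 ≤ x i ∧ x i ≤ 1 / 2 := by
    intro x
    simp only [hK, Set.mem_Icc, Pi.le_def]
    exact forall_and.symm
  have hKc : IsCompact K := isCompact_Icc
  have hKne : K.Nonempty := ⟨fun _ => 0, (memK _).2 fun i => by norm_num⟩
  have hGc : ContinuousOn G K := by
    have : LipschitzOnWith 1 G K := LipschitzOnWith.of_dist_le_mul fun x hx y hy => by
      simpa using hlip x y ((memK x).1 hx) ((memK y).1 hy)
    exact this.continuousOn
  obtain ⟨z, hz, hmin⟩ := hKc.exists_isMinOn hKne 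
    (show ContinuousOn (fun x => dist (G x) x) K from
      continuous_dist.comp_continuousOn (hGc.prodMk continuousOn_id))
  refine ⟨z, (memK z).1 hz, ?_⟩
  rw [← dist_le_zero]
  refine le_of_forall_pos_le_add fun ε hε => ?_
  -- contraction `(1-δ) G`
  obtain ⟨δ, hδ0, hδ1, hδε⟩ : ∃ δ : ℝ, 0 < δ ∧ δ < 1 ∧ δ ≤ ε :=
    ⟨min ε (1 / 2), by positivity, lt_of_le_of_lt (min_le_right _ _) (by norm_num), min_le_left _ _⟩
  have hmaps : Set.MapsTo (fun x => (1 - δ) • G x) K K := by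
    intro x _
    rw [memK]
    intro i
    have := hG x i
    simp only [Pi.smul_apply, smul_eq_mul]
    constructor <;> nlinarith
  have hcon : ContractingWith (Real.toNNReal (1 - δ)) (hmaps.restrict _ K K) := by
    refine ⟨by rw [← NNReal.coe_lt_coe, Real.coe_toNNReal _ (by linarith)]; simpa using hδ0, ?_⟩
    refine LipschitzWith.of_dist_le_mul fun x y => ?_
    rw [Real.coe_toNNReal _ (by linarith), Subtype.dist_eq, Subtype.dist_eq]
    simp only [Set.MapsTo.val_restrict_apply]
    rw [dist_smul₀, Real.norm_of_nonneg (by linarith)]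
    exact mul_le_mul_of_nonneg_left (hlip _ _ ((memK _).1 x.2) ((memK _).1 y.2)) (by linarith)
  have : CompleteSpace K := hKc.isComplete.completeSpace_coe
  have : Nonempty K := hKne.to_subtype
  obtain ⟨y, hy⟩ : ∃ y : K, hmaps.restrict _ K K y = y :=
    ⟨ContractingWith.fixedPoint _ hcon, hcon.fixedPoint_isFixedPt⟩
  have hy' : (1 - δ) • G y.1 = y.1 := congrArg Subtype.val hy
  have h1 : dist (G z) z ≤ dist (G y.1) y.1 := hmin y.2
  refine h1.trans ?_
  rw [dist_pi_le_iff (by linarith)]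
  intro i
  have h2 := congrFun hy' i
  simp only [Pi.smul_apply, smul_eq_mul] at h2
  have h3 := hG y.1 i
  rw [← h2, Real.dist_eq, abs_le]
  constructor <;> nlinarith

lemma step {N : C₀(ℕ, ℝ) → ℝ} (hN : IsNorm N)
    (hcomp : ∀ x : C₀(ℕ, ℝ), N x ≤ ‖x‖ ∧ ‖x‖ ≤ (3 / 2 : ℝ) * N x)
    (n : ℕ) (p : ℕ → C₀(ℕ, ℝ)) (hp : ∀ i < n, Good i (p i)) :
    ∃ q, Good n q ∧ ∀ i < n, N (q - p i) = 1 := by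
  have hle : ∀ x, N x ≤ ‖x‖ := fun x => (hcomp x).1
  let u : (Fin n → ℝ) → Fin n → ℝ → C₀(ℕ, ℝ) := fun x i t => pt n (Function.update x i t) - p i
  let A : (Fin n → ℝ) → Fin n → Set ℝ := fun x i => {t | 0 ≤ t ∧ t ≤ 1 / 2 ∧ N (u x i t) ≤ 1}
  let G : (Fin n → ℝ) → Fin n → ℝ := fun x i => sSup (A x i)
  have hui : ∀ x i t, u x i t i = 1 + t := by
    intro x i t
    have h1 := (hp i i.2).1
    simp only [u, ZeroAtInftyContinuousMap.sub_apply, pt_apply, h1, i.2, dif_pos, Fin.eta,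
      Function.update_self]
    ring
  have huk : ∀ x : Fin n → ℝ, (∀ i, 0 ≤ x i ∧ x i ≤ 1 / 2) → ∀ (i : Fin n) t (k : ℕ), k ≠ i → k < n →
      |u x i t k| ≤ 1 / 2 := by
    intro x hx i t k hki hkn
    obtain ⟨h1, h2, h3⟩ := hp i i.2
    have hne : (⟨k, hkn⟩ : Fin n) ≠ i := fun h => hki (by rw [← h])
    simp only [u, ZeroAtInftyContinuousMap.sub_apply, pt_apply, hkn, dif_pos,
      Function.update_of_ne hne]
    have hxk := hx ⟨k, hkn⟩
    rw [abs_le]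
    rcases lt_or_gt_of_ne hki with h | h
    · have := h2 k h
      constructor <;> linarith
    · rw [h3 k h]
      constructor <;> linarith
  have hun : ∀ x (i : Fin n) t (k : ℕ), ¬ k < n → u x i t k = if k = n then -1 else 0 := by
    intro x i t k hk
    obtain ⟨h1, h2, h3⟩ := hp i i.2
    simp only [u, ZeroAtInftyContinuousMap.sub_apply, pt_apply, hk, dif_neg, not_false_eq_true]
    rw [h3 k (by have := i.2; omega), sub_zero]
  have hun1 : ∀ x (i : Fin n) t (k : ℕ), ¬ k < n → |u x i t k| ≤ 1 := by
    intro x i t k hk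
    rw [hun x i t k hk]
    split_ifs <;> simp
  have hlipt : ∀ x i s t, N (u x i s) ≤ N (u x i t) + |s - t| := by
    intro x i s t
    refine (N_lip hN hle _ (u x i t)).trans (add_le_add_right ?_ _)
    have : u x i s - u x i t
        = pt n (Function.update x i s) - pt n (Function.update x i t) := by
      simp only [u]; abel
    rw [this]
    refine pt_dist _ _ _ _ (abs_nonneg _) fun k => ?_
    by_cases hk : k = i
    · subst hk; simp
    · simp [Function.update_of_ne hk]
  have hA0 : ∀ x : Fin n → ℝ, (∀ i, 0 ≤ x i ∧ x i ≤ 1 / 2) → ∀ i, (0 : ℝ) ∈ A x i := by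
    intro x hx i
    refine ⟨le_rfl, by norm_num, (hle _).trans (norm_le_of _ _ zero_le_one fun k => ?_)⟩
    by_cases hk : k = i
    · rw [hk, hui]; simp
    · by_cases hkn : k < n
      · exact (huk x hx i 0 k hk hkn).trans (by norm_num)
      · exact hun1 x i 0 k hkn
  have hbdd : ∀ x i, BddAbove (A x i) := fun x i => ⟨1 / 2, fun t ht => ht.2.1⟩
  have hG0 : ∀ x i, 0 ≤ G x i := fun x i => Real.sSup_nonneg fun t ht => ht.1
  have hG1 : ∀ x i, G x i ≤ 1 / 2 := fun x i => Real.sSup_le (fun t ht => ht.2.1) (by norm_num)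
  have hGN : ∀ x : Fin n → ℝ, (∀ i, 0 ≤ x i ∧ x i ≤ 1 / 2) → ∀ i, N (u x i (G x i)) = 1 := by
    intro x hx i
    have hle1 : N (u x i (G x i)) ≤ 1 := by
      refine le_of_forall_pos_le_add fun ε hε => ?_
      obtain ⟨t, ht, hlt⟩ := exists_lt_of_lt_csSup ⟨0, hA0 x hx i⟩
        (show G x i - ε < sSup (A x i) from by show G x i - ε < G x i; linarith)
      have h1 : t ≤ G x i := le_csSup (hbdd x i) ht
      have h2 := hlipt x i (G x i) t
      rw [abs_of_nonneg (by linarith)] at h2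
      have := ht.2.2
      linarith
    refine le_antisymm hle1 ?_
    by_contra hlt
    push Not at hlt
    have hge : 1 + G x i ≤ 3 / 2 * N (u x i (G x i)) := by
      refine le_trans ?_ (hcomp _).2
      refine le_trans ?_ (abs_le_norm _ i)
      rw [hui]
      exact le_abs_self _
    have hG2 : G x i < 1 / 2 := by linarith
    set t := min (1 / 2) (G x i + (1 - N (u x i (G x i)))) with ht
    have ht1 : G x i < t := lt_min hG2 (by linarith)
    have ht2 : t ≤ G x i + (1 - N (u x i (G x i))) := min_le_right _ _
    have htA : t ∈ A x i := by
      refine ⟨(hG0 x i).trans ht1.le, min_le_left _ _, ?_⟩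
      have h2 := hlipt x i t (G x i)
      rw [abs_of_nonneg (by linarith)] at h2
      linarith
    have : t ≤ G x i := le_csSup (hbdd x i) htA
    linarith
  have hmono : ∀ x y : Fin n → ℝ, (∀ i, 0 ≤ x i ∧ x i ≤ 1 / 2) → (∀ i, 0 ≤ y i ∧ y i ≤ 1 / 2) →
      ∀ i, G y i ≤ G x i + dist x y := by
    intro x y hx hy i
    rcases (dist_nonneg (x := x) (y := y)).eq_or_lt with h0 | hpos
    · have : x = y := dist_eq_zero.1 h0.symm
      subst this; simp
    by_cases hd : dist x y ≤ G y i
    · have : G y i - dist x y ∈ A x i := by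
        refine ⟨by linarith, by linarith [hG1 y i], ?_⟩
        refine key hN hle (u y i (G y i)) _ (G y i) (dist x y) hpos hd (hG1 y i)
          (hGN y hy i).le i (hui _ _ _) (by rw [hui]; ring) fun k hk => ?_
        by_cases hkn : k < n
        · left
          refine ⟨huk y hy i _ k hk hkn, ?_⟩
          have hne : (⟨k, hkn⟩ : Fin n) ≠ i := fun h => hk (by rw [← h])
          simp only [u, ZeroAtInftyContinuousMap.sub_apply, pt_apply, hkn, dif_pos,
            Function.update_of_ne hne]
          rw [sub_sub_sub_cancel_right, ← Real.dist_eq]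
          exact dist_le_pi_dist x y _
        · right
          exact ⟨by rw [hun _ _ _ _ hkn, hun _ _ _ _ hkn], hun1 _ _ _ _ hkn⟩
      have := le_csSup (hbdd x i) this
      change _ ≤ G x i at this
      linarith
    · linarith [hG0 x i]
  obtain ⟨x, hx, hfix⟩ := fixed n G (fun x i => ⟨hG0 x i, hG1 x i⟩) (by
    intro x y hx hy
    rw [dist_pi_le_iff dist_nonneg]
    intro i
    have h1 := hmono x y hx hy i
    have h2 := hmono y x hy hx i
    rw [dist_comm y x] at h2
    rw [Real.dist_eq, abs_le]
    constructor <;> linarith)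
  refine ⟨pt n x, ⟨?_, ?_, ?_⟩, ?_⟩
  · simp [pt_apply]
  · intro k hk
    rw [pt_apply, dif_pos hk]
    exact hx _
  · intro k hk
    rw [pt_apply, dif_neg (by omega), if_neg (by omega)]
  · intro i hi
    have h := hGN x hx ⟨i, hi⟩
    rw [hfix] at h
    simpa [u] using h

end C0Aux

/-- **Claim.** If `N` is an equivalent norm on `c₀` with `N x ≤ ‖x‖_∞ ≤ (3/2) * N x`
for every `x`, then `(c₀, N)` admits an infinite `1`-equilateral set.
Here `c₀` is the space `C₀(ℕ, ℝ)` of real sequences vanishing at infinity, and `‖·‖`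
denotes its canonical sup norm. -/
theorem c0_renorm_infinite_equilateral
    (N : C₀(ℕ, ℝ) → ℝ) (hN : IsNorm N)
    (hcomp : ∀ x : C₀(ℕ, ℝ), N x ≤ ‖x‖ ∧ ‖x‖ ≤ (3 / 2 : ℝ) * N x) :
    ∃ S : Set C₀(ℕ, ℝ), S.Infinite ∧ ∀ x ∈ S, ∀ y ∈ S, x ≠ y → N (x - y) = 1 := by
  choose! next hnext1 hnext2 using C0Aux.step hN hcomp
  let F : ℕ → ℕ → C₀(ℕ, ℝ) := fun n =>
    Nat.rec (fun _ => 0) (fun m f => Function.update f m (next m f)) n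
  have hF : ∀ n, F (n + 1) = Function.update (F n) n (next n (F n)) := fun n => rfl
  let p : ℕ → C₀(ℕ, ℝ) := fun n => next n (F n)
  have hFp : ∀ n, ∀ i < n, F n i = p i := by
    intro n
    induction n with
    | zero => intro i hi; omega
    | succ m ih =>
      intro i hi
      rw [hF]
      by_cases h : i = m
      · subst h; simp [p]
      · rw [Function.update_of_ne h]; exact ih i (by omega)
  have hgood : ∀ n, C0Aux.Good n (p n) := by
    intro n
    induction n using Nat.strong_induction_on with
    | _ n ih => exact hnext1 n (F n) fun i hi => by rw [hFp n i hi]; exact ih i hi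
  have heq : ∀ n, ∀ i < n, N (p n - p i) = 1 := by
    intro n i hi
    have := hnext2 n (F n) (fun i hi => by rw [hFp n i hi]; exact hgood i) i hi
    rwa [hFp n i hi] at this
  have hneg : ∀ x y, N (x - y) = N (y - x) := by
    intro x y
    have := hN.2.1 (-1) (y - x)
    simpa using this
  have hinj : Function.Injective p := by
    have h0 : N 0 = 0 := (hN.1 0).2 rfl
    intro a b hab
    by_contra hne
    rcases lt_or_gt_of_ne hne with h | h
    · have := heq b a h
      rw [hab, sub_self, h0] at this
      norm_num at this
    · have := heq a b h
      rw [hab, sub_self, h0] at this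
      norm_num at this
  refine ⟨Set.range p, Set.infinite_range_of_injective hinj, ?_⟩
  rintro _ ⟨a, rfl⟩ _ ⟨b, rfl⟩ hne
  rcases lt_trichotomy a b with h | h | h
  · rw [hneg]; exact heq b a h
  · exact absurd (by rw [h]) hne
  · exact heq a b h
end

section
/- Let X be a real Banach space containing a closed subspace linearly isomorphic to ℓ₁. Then for every ε > 0 there exist a closed subspace Z of X and a norm |||·||| on Z such that (1/(1+ε))|||z||| ≤ ‖z‖ ≤ |||z||| for all z ∈ Z, the space (Z, |||·|||) is isometrically isomorphic to ℓ₁, and consequently (Z, |||·|||) admits an infinite equilateral set. -/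
/-- The ℓ₁ norm of a finitely supported sequence. -/
noncomputable def l1n (a : ℕ →₀ ℝ) : ℝ := a.sum fun _ r => |r|

theorem l1n_eq (a : ℕ →₀ ℝ) (s : Finset ℕ) (h : a.support ⊆ s) : l1n a = ∑ i ∈ s, |a i| :=
  Finsupp.sum_of_support_subset a h (fun _ r => |r|) (by simp)

theorem l1n_add (v w : ℕ →₀ ℝ) (h : ∀ i, v i = 0 ∨ w i = 0) : l1n (v + w) = l1n v + l1n w := by
  classical
  rw [l1n_eq (v + w) (v.support ∪ w.support) Finsupp.support_add,
    l1n_eq v (v.support ∪ w.support) Finset.subset_union_left,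
    l1n_eq w (v.support ∪ w.support) Finset.subset_union_right, ← Finset.sum_add_distrib]
  refine Finset.sum_congr rfl fun i _ => ?_
  rcases h i with h | h <;> simp [h]

theorem l1n_smul (c : ℝ) (v : ℕ →₀ ℝ) : l1n (c • v) = |c| * l1n v := by
  rw [l1n_eq (c • v) v.support Finsupp.support_smul, l1n_eq v v.support subset_rfl, Finset.mul_sum]
  exact Finset.sum_congr rfl fun i _ => by simp [abs_mul]

theorem l1n_nonneg (v : ℕ →₀ ℝ) : 0 ≤ l1n v := Finset.sum_nonneg fun _ _ => abs_nonneg _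

theorem l1n_eq_zero {v : ℕ →₀ ℝ} (h : l1n v = 0) : v = 0 := by
  rw [l1n_eq v v.support subset_rfl, Finset.sum_eq_zero_iff_of_nonneg (fun _ _ => abs_nonneg _)] at h
  ext i
  by_cases hi : i ∈ v.support
  · simpa using h i hi
  · simpa using hi

theorem l1n_single (n : ℕ) : l1n (Finsupp.single n 1) = 1 := by
  simp [l1n]

/-- James' non-distortion theorem for ℓ₁ (blocking argument). -/
theorem james_blocks {X : Type*} [NormedAddCommGroup X] [NormedSpace ℝ X]
    (L : (ℕ →₀ ℝ) →ₗ[ℝ] X) (c C : ℝ) (hc : 0 < c)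
    (hL : ∀ a, c * l1n a ≤ ‖L a‖) (hU : ∀ a, ‖L a‖ ≤ C * l1n a) {ε : ℝ} (hε : 0 < ε) :
    ∃ y : ℕ → X, (∀ k, ‖y k‖ ≤ 1) ∧ ∀ (b : ℕ → ℝ) (m : ℕ),
      (1 / (1 + ε)) * ∑ k ∈ Finset.range m, |b k| ≤ ‖∑ k ∈ Finset.range m, b k • y k‖ := by
  classical
  let A : ℕ → Set ℝ := fun n => {t | ∃ a : ℕ →₀ ℝ, (∀ i < n, a i = 0) ∧ l1n a = 1 ∧ ‖L a‖ = t}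
  have hAne : ∀ n, ‖L (Finsupp.single n 1)‖ ∈ A n := fun n =>
    ⟨Finsupp.single n 1, fun i hi => Finsupp.single_eq_of_ne (by omega), l1n_single n, rfl⟩
  have hAb : ∀ n, BddBelow (A n) := fun n => ⟨0, by rintro t ⟨a, -, -, rfl⟩; exact norm_nonneg _⟩
  let f : ℕ → ℝ := fun n => sInf (A n)
  have hfc : ∀ n, c ≤ f n := fun n => by
    refine le_csInf ⟨_, hAne n⟩ ?_
    rintro t ⟨a, -, h1, rfl⟩
    simpa [h1] using hL a
  have hfC : BddAbove (Set.range f) := by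
    refine ⟨C, ?_⟩
    rintro _ ⟨n, rfl⟩
    refine (csInf_le (hAb n) (hAne n)).trans ?_
    simpa [l1n_single] using hU (Finsupp.single n 1)
  set lam : ℝ := ⨆ n, f n with hlam
  have hlam0 : 0 < lam := hc.trans_le ((hfc 0).trans (le_ciSup hfC 0))
  obtain ⟨δ, hδ, hδε⟩ : ∃ δ : ℝ, 0 < δ ∧ (1 + δ) * (1 + δ) ≤ 1 + ε := by
    refine ⟨Real.sqrt (1 + ε) - 1, ?_, ?_⟩
    · have : Real.sqrt 1 < Real.sqrt (1 + ε) := Real.sqrt_lt_sqrt (by norm_num) (by linarith)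
      simp at this; simpa using this
    · have := Real.mul_self_sqrt (show (0:ℝ) ≤ 1 + ε by linarith)
      simp [this]
  obtain ⟨n0, hn0⟩ : ∃ n, lam / (1 + δ) < f n := by
    apply exists_lt_of_lt_ciSup
    rw [div_lt_iff₀ (by linarith)]
    nlinarith
  have hg : ∀ n, ∃ a : ℕ →₀ ℝ, (∀ i < n, a i = 0) ∧ l1n a = 1 ∧ ‖L a‖ < lam * (1 + δ) := by
    intro n
    have h1 : f n < lam * (1 + δ) := (le_ciSup hfC n).trans_lt (by nlinarith)
    obtain ⟨t, ⟨a, h2, h3, rfl⟩, h4⟩ := exists_lt_of_csInf_lt ⟨_, hAne n⟩ h1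
    exact ⟨a, h2, h3, h4⟩
  choose g hg0 hg1 hgl using hg
  have hhom : ∀ a : ℕ →₀ ℝ, (∀ i < n0, a i = 0) → f n0 * l1n a ≤ ‖L a‖ := by
    intro a ha
    by_cases h0 : l1n a = 0
    · simp [h0]
    have hpos : 0 < l1n a := lt_of_le_of_ne (l1n_nonneg a) (Ne.symm h0)
    have : f n0 ≤ ‖L ((l1n a)⁻¹ • a)‖ := by
      refine csInf_le (hAb n0) ⟨_, fun i hi => by simp [ha i hi], ?_, rfl⟩
      rw [l1n_smul, abs_of_pos (inv_pos.2 hpos), inv_mul_cancel₀ h0]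
    rw [map_smul, norm_smul, Real.norm_of_nonneg (inv_pos.2 hpos).le] at this
    calc f n0 * l1n a ≤ ((l1n a)⁻¹ * ‖L a‖) * l1n a := by gcongr
      _ = ‖L a‖ := by field_simp
  let p : ℕ → ℕ := fun k => Nat.rec n0 (fun _ q => max q ((g q).support.sup id + 1)) k
  have hp0 : p 0 = n0 := rfl
  have hps : ∀ k, p (k+1) = max (p k) ((g (p k)).support.sup id + 1) := fun k => rfl
  have hpn : ∀ k, n0 ≤ p k := fun k => by
    induction k with
    | zero => exact le_rfl
    | succ k ih => rw [hps]; exact ih.trans (le_max_left _ _)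
  have hgz : ∀ k i, p (k+1) ≤ i → g (p k) i = 0 := by
    intro k i hi
    by_contra h
    have h1 : i ≤ (g (p k)).support.sup id :=
      Finset.le_sup (f := id) (Finsupp.mem_support_iff.2 h)
    have := le_max_right (p k) ((g (p k)).support.sup id + 1)
    rw [hps] at hi
    omega
  have key : ∀ (b : ℕ → ℝ) (m : ℕ),
      (∀ i, p m ≤ i → (∑ k ∈ Finset.range m, b k • g (p k)) i = 0) ∧
      (∀ i < n0, (∑ k ∈ Finset.range m, b k • g (p k)) i = 0) ∧
      l1n (∑ k ∈ Finset.range m, b k • g (p k)) = ∑ k ∈ Finset.range m, |b k| := by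
    intro b m
    induction m with
    | zero => simp [l1n]
    | succ m ih =>
      obtain ⟨h1, h2, h3⟩ := ih
      refine ⟨fun i hi => ?_, fun i hi => ?_, ?_⟩
      · rw [Finset.sum_range_succ, Finsupp.add_apply,
          h1 i (le_trans (by rw [hps]; exact le_max_left _ _) hi), Finsupp.smul_apply, hgz m i hi]
        simp
      · rw [Finset.sum_range_succ, Finsupp.add_apply, h2 i hi, Finsupp.smul_apply,
          hg0 _ i (hi.trans_le (hpn m))]
        simp
      · rw [Finset.sum_range_succ, l1n_add, h3, l1n_smul, hg1, mul_one, Finset.sum_range_succ]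
        intro i
        rcases le_or_gt (p m) i with h | h
        · exact Or.inl (h1 i h)
        · right
          rw [Finsupp.smul_apply, hg0 _ i h, smul_zero]
  have hM : 0 < lam * (1 + δ) := by positivity
  refine ⟨fun k => (lam * (1 + δ))⁻¹ • L (g (p k)), fun k => ?_, fun b m => ?_⟩
  · rw [norm_smul, Real.norm_of_nonneg (inv_pos.2 hM).le, inv_mul_le_iff₀ hM, mul_one]
    exact (hgl _).le
  · obtain ⟨-, h2, h3⟩ := key b m
    have h4 := hhom _ h2
    have h5 : ∑ k ∈ Finset.range m, b k • (lam * (1 + δ))⁻¹ • L (g (p k))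
        = (lam * (1 + δ))⁻¹ • L (∑ k ∈ Finset.range m, b k • g (p k)) := by
      rw [map_sum, Finset.smul_sum]
      exact Finset.sum_congr rfl fun k _ => by rw [map_smul, smul_comm]
    rw [h5, norm_smul, Real.norm_of_nonneg (inv_pos.2 hM).le]
    rw [h3] at h4
    have h6 : (0:ℝ) ≤ ∑ k ∈ Finset.range m, |b k| := Finset.sum_nonneg fun _ _ => abs_nonneg _
    rw [le_inv_mul_iff₀ hM]
    refine le_trans ?_ h4
    rw [← mul_assoc]
    refine mul_le_mul_of_nonneg_right (le_trans ?_ hn0.le) h6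
    rw [mul_one_div, div_le_div_iff₀ (by linarith) (by linarith)]
    nlinarith

theorem lp1_hasSum (a : lp (fun _ : ℕ => ℝ) 1) : HasSum (fun i => |a i|) ‖a‖ := by
  simpa using lp.hasSum_norm (p := 1) (by simp) a

open Filter Topology in
theorem extend_l1 {X : Type*} [NormedAddCommGroup X] [NormedSpace ℝ X] [CompleteSpace X]
    (y : ℕ → X) (h1 : ∀ k, ‖y k‖ ≤ 1) (d : ℝ)
    (h2 : ∀ (b : ℕ → ℝ) (m : ℕ),
      d * ∑ k ∈ Finset.range m, |b k| ≤ ‖∑ k ∈ Finset.range m, b k • y k‖) :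
    ∃ S : lp (fun _ : ℕ => ℝ) 1 →ₗ[ℝ] X, ∀ a, d * ‖a‖ ≤ ‖S a‖ ∧ ‖S a‖ ≤ ‖a‖ := by
  have hle : ∀ (a : lp (fun _ : ℕ => ℝ) 1) i, ‖a i • y i‖ ≤ |a i| := fun a i => by
    rw [norm_smul, Real.norm_eq_abs]
    exact mul_le_of_le_one_right (abs_nonneg _) (h1 i)
  have hs : ∀ a : lp (fun _ : ℕ => ℝ) 1, Summable fun i => a i • y i := fun a =>
    Summable.of_norm_bounded (lp1_hasSum a).summable (hle a)
  refine ⟨{ toFun := fun a => ∑' i, a i • y i, map_add' := ?_, map_smul' := ?_ }, fun a => ⟨?_, ?_⟩⟩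
  · intro a b
    rw [← (hs a).tsum_add (hs b)]
    exact tsum_congr fun i => by simp [add_smul]
  · intro r a
    rw [RingHom.id_apply, ← (hs a).tsum_const_smul]
    exact tsum_congr fun i => by simp [mul_smul]
  · exact le_of_tendsto_of_tendsto' ((lp1_hasSum a).tendsto_sum_nat.const_mul d)
      ((hs a).hasSum.tendsto_sum_nat.norm) fun m => h2 _ m
  · exact tsum_of_norm_bounded (lp1_hasSum a) (hle a)

/-- If the real Banach space `X` contains a closed subspace linearly isomorphic to `ℓ₁`,
then for every `ε > 0` there are a closed subspace `Z` of `X` and a norm `N` on `Z` with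
`(1/(1+ε)) * N z ≤ ‖z‖ ≤ N z` for all `z ∈ Z`, such that `(Z, N)` is isometrically
isomorphic to `ℓ₁`, and consequently `(Z, N)` admits an infinite equilateral set. -/
theorem l1_subspace_renorm_isometric_l1
    (X : Type*) [NormedAddCommGroup X] [NormedSpace ℝ X] [CompleteSpace X]
    (Y : Subspace ℝ X) (hY : IsClosed (Y : Set X))
    (hiso : Nonempty (Y ≃L[ℝ] lp (fun _ : ℕ => ℝ) 1))
    {ε : ℝ} (hε : 0 < ε) :
    ∃ Z : Subspace ℝ X, IsClosed (Z : Set X) ∧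
      ∃ N : Z → ℝ, IsNorm N ∧
        (∀ z : Z, (1 / (1 + ε)) * N z ≤ ‖z‖ ∧ ‖z‖ ≤ N z) ∧
        (∃ e : Z ≃ₗ[ℝ] lp (fun _ : ℕ => ℝ) 1, ∀ z : Z, N z = ‖e z‖) ∧
        (∃ S : Set Z, S.Infinite ∧ ∃ lam : ℝ, 0 < lam ∧
          ∀ x ∈ S, ∀ y ∈ S, x ≠ y → N (x - y) = lam) := by
  obtain ⟨T⟩ := hiso
  have : CompleteSpace Y := hY.completeSpace_coe
  let J : (ℕ →₀ ℝ) →ₗ[ℝ] lp (fun _ : ℕ => ℝ) 1 :=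
    Finsupp.lsum ℝ fun i => lp.lsingle (E := fun _ : ℕ => ℝ) (𝕜 := ℝ) 1 i
  have hJ : ∀ a, ‖J a‖ = l1n a := fun a => by
    have := lp.norm_sum_single (E := fun _ : ℕ => ℝ) (p := 1) (by simp) (fun i => a i) a.support
    simp only [ENNReal.toReal_one, Real.rpow_one, Real.norm_eq_abs] at this
    exact this
  let L : (ℕ →₀ ℝ) →ₗ[ℝ] X := Y.subtype ∘ₗ T.symm.toLinearEquiv.toLinearMap ∘ₗ J
  have hLa : ∀ a, ‖L a‖ = ‖T.symm (J a)‖ := fun a => rfl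
  have hU : ∀ a, ‖L a‖ ≤ ‖(T.symm : lp (fun _ : ℕ => ℝ) 1 →L[ℝ] Y)‖ * l1n a := fun a => by
    rw [hLa, ← hJ]
    exact (T.symm : lp (fun _ : ℕ => ℝ) 1 →L[ℝ] Y).le_opNorm (J a)
  have hT : ∀ a, l1n a ≤ (‖(T : Y →L[ℝ] lp (fun _ : ℕ => ℝ) 1)‖ + 1) * ‖L a‖ := fun a => by
    have := (T : Y →L[ℝ] lp (fun _ : ℕ => ℝ) 1).le_opNorm (T.symm (J a))
    simp only [ContinuousLinearEquiv.coe_coe, ContinuousLinearEquiv.apply_symm_apply] at this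
    rw [hLa, ← hJ]
    nlinarith [norm_nonneg (T.symm (J a))]
  have hK : 0 < ‖(T : Y →L[ℝ] lp (fun _ : ℕ => ℝ) 1)‖ + 1 := by positivity
  obtain ⟨y, hy1, hy2⟩ := james_blocks L _ _ (inv_pos.2 hK)
    (fun a => (inv_mul_le_iff₀ hK).2 (hT a)) hU hε
  obtain ⟨S, hS⟩ := extend_l1 y hy1 _ hy2
  have hd : 0 < 1 / (1 + ε) := by positivity
  have hanti : AntilipschitzWith (1 + ε).toNNReal S :=
    AddMonoidHomClass.antilipschitz_of_bound S fun a => by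
      have := (hS a).1
      rw [Real.coe_toNNReal _ (by linarith)]
      rwa [one_div, inv_mul_le_iff₀ (by linarith)] at this
  have hcont : UniformContinuous S :=
    (AddMonoidHomClass.lipschitz_of_bound S 1 fun a => by
      simpa using (hS a).2).uniformContinuous
  let e := (LinearEquiv.ofInjective S hanti.injective).symm
  have hSe : ∀ z, S (e z) = z := fun z =>
    congrArg Subtype.val ((LinearEquiv.ofInjective S hanti.injective).apply_symm_apply z)
  refine ⟨LinearMap.range S, ?_, fun z => ‖e z‖, ⟨?_, ?_, ?_⟩, ?_, ⟨e, fun _ => rfl⟩, ?_⟩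
  · rw [LinearMap.coe_range]
    exact hanti.isClosed_range hcont
  · intro z; simp
  · intro a z; simp [norm_smul]
  · intro z w; simp only [map_add]; exact norm_add_le _ _
  · intro z
    have := hS (e z)
    rwa [hSe] at this
  · have hdist : ∀ i j : ℕ, i ≠ j → ‖lp.single (E := fun _ : ℕ => ℝ) 1 i (1:ℝ)
        - lp.single (E := fun _ : ℕ => ℝ) 1 j (1:ℝ)‖ = 2 := by
      intro i j hij
      have := lp.norm_sum_single (E := fun _ : ℕ => ℝ) (p := 1) (by simp)
        (fun k => if k = i then (1:ℝ) else -1) {i, j}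
      rw [Finset.sum_pair hij, Finset.sum_pair hij] at this
      simp [hij.symm, lp.single_neg, ← sub_eq_add_neg] at this
      rw [this]; norm_num
    have hinj : Function.Injective fun i : ℕ => e.symm (lp.single (E := fun _ : ℕ => ℝ) 1 i (1:ℝ)) := by
      intro i j h
      by_contra hij
      have := hdist i j hij
      rw [e.symm.injective h] at this
      simp at this
    refine ⟨_, Set.infinite_range_of_injective hinj, 2, by norm_num, ?_⟩
    rintro _ ⟨i, rfl⟩ _ ⟨j, rfl⟩ hne
    have hij : i ≠ j := fun h => hne (by rw [h])
    simpa using hdist i j hij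
end

section
/- Let S be an equilateral set in a real normed space (X, ‖·‖). Then S is antipodal: for every x, y ∈ S with x ≠ y there exists f ∈ X* such that f(x) < f(y) and f(x) ≤ f(z) ≤ f(y) for all z ∈ S. -/
/-- **Proposition 2.** Every equilateral set `S` in a real normed space is antipodal:
for every `x, y ∈ S` with `x ≠ y` there is a continuous functional `f` with
`f x < f y` and `f x ≤ f z ≤ f y` for all `z ∈ S`. -/
theorem equilateral_antipodal
    (X : Type*) [NormedAddCommGroup X] [NormedSpace ℝ X]
    (S : Set X) {lam : ℝ} (hlam : 0 < lam)
    (heq : ∀ x ∈ S, ∀ y ∈ S, x ≠ y → ‖x - y‖ = lam) :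
    ∀ x ∈ S, ∀ y ∈ S, x ≠ y →
      ∃ f : X →L[ℝ] ℝ, f x < f y ∧ ∀ z ∈ S, f x ≤ f z ∧ f z ≤ f y := by
  intro x hx y hy hxy
  obtain ⟨g, hg, hgx⟩ := exists_dual_vector'' ℝ (y - x)
  have hd : g y - g x = lam := by
    rw [← map_sub, hgx, heq y hy x hx hxy.symm]
    rfl
  have hb : ∀ a ∈ S, ∀ b ∈ S, g a - g b ≤ lam := by
    intro a ha b hb
    have h1 : ‖a - b‖ ≤ lam := by
      by_cases h : a = b
      · simp [h, hlam.le]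
      · exact (heq a ha b hb h).le
    have h2 := g.le_of_opNorm_le hg (a - b)
    rw [← map_sub]
    have h3 := le_abs_self (g (a - b))
    rw [Real.norm_eq_abs] at h2
    linarith
  refine ⟨g, by linarith, fun z hz => ⟨?_, ?_⟩⟩
  · linarith [hb y hy z hz]
  · linarith [hb z hz x hx]
end

section
/- Let (X, ‖·‖) be a real Banach space and let S ⊆ X be a bounded and separated antipodal set with constants c₁ = 1, c₂ = c and d. Then there is an equivalent norm |||·||| on X such that S is an equilateral set in (X, |||·|||), and moreover the Banach–Mazur distance between (X, ‖·‖) and (X, |||·|||) is at most 2c/d. -/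
/-- `S` is a bounded and separated antipodal set with constants `c₁, c₂, d`. -/
def BddSepAntipodal {X : Type*} [NormedAddCommGroup X] [NormedSpace ℝ X]
    (S : Set X) (c₁ c₂ d : ℝ) : Prop :=
  (∀ x ∈ S, ‖x‖ ≤ c₁) ∧
  ∀ x ∈ S, ∀ y ∈ S, x ≠ y → ∃ f : X →L[ℝ] ℝ, ‖f‖ ≤ c₂ ∧ d ≤ f y - f x ∧
    ∀ z ∈ S, f x ≤ f z ∧ f z ≤ f y

/-- **Theorem 3.** If `S` is a bounded and separated antipodal set in a real Banach space
`X` with constants `c₁ = 1`, `c₂ = c` and `d`, then `X` admits an equivalent norm `N` in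
which `S` is equilateral, and the Banach–Mazur distance of the two norms is at most
`2c/d` (witnessed by the identity: `a * N x ≤ ‖x‖ ≤ b * N x` with `b / a ≤ 2c/d`). -/
theorem antipodal_renorm_equilateral
    (X : Type*) [NormedAddCommGroup X] [NormedSpace ℝ X] [CompleteSpace X]
    (S : Set X) (hS : S.Nontrivial) {c d : ℝ} (hc : 0 < c) (hd : 0 < d)
    (hant : BddSepAntipodal S 1 c d) :
    ∃ N : X → ℝ, IsNorm N ∧
      (∃ a b : ℝ, 0 < a ∧ 0 < b ∧ (∀ x, a * N x ≤ ‖x‖ ∧ ‖x‖ ≤ b * N x) ∧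
        b / a ≤ 2 * c / d) ∧
      (∃ lam : ℝ, 0 < lam ∧ ∀ x ∈ S, ∀ y ∈ S, x ≠ y → N (x - y) = lam) := by
  classical
  obtain ⟨hb, hf⟩ := hant
  have hdc : d ≤ 2 * c := by
    obtain ⟨x, hx, y, hy, hxy⟩ := hS
    obtain ⟨f, h1, h2, -⟩ := hf x hx y hy hxy
    have h3 := f.le_opNorm (y - x)
    have h4 : ‖y - x‖ ≤ 2 := by
      have := norm_sub_le y x
      linarith [hb x hx, hb y hy]
    have h5 : ‖f‖ * ‖y - x‖ ≤ c * 2 := by gcongr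
    have h6 := le_abs_self (f (y - x))
    rw [Real.norm_eq_abs] at h3
    rw [map_sub] at h3 h6
    linarith
  have hhalf : (1 / 2 : ℝ) ≤ c / d := by
    rw [div_le_div_iff₀ (by norm_num) hd]; linarith
  let F := {g : X →L[ℝ] ℝ // ‖g‖ ≤ c / d ∧ ∀ s ∈ S, ∀ t ∈ S, |g (s - t)| ≤ 1}
  have : Nonempty F := ⟨⟨0, by simp; positivity⟩⟩
  have hle : ∀ (x : X) (g : F), |g.1 x| ≤ c / d * ‖x‖ := fun x g => by
    have h3 := g.1.le_opNorm x
    rw [Real.norm_eq_abs] at h3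
    exact h3.trans (mul_le_mul_of_nonneg_right g.2.1 (norm_nonneg _))
  have hbdd : ∀ x : X, BddAbove (Set.range fun g : F => |g.1 x|) := fun x =>
    ⟨c / d * ‖x‖, by rintro _ ⟨g, rfl⟩; exact hle x g⟩
  have hlow : ∀ x : X, ‖x‖ ≤ 2 * ⨆ g : F, |g.1 x| := fun x => by
    obtain ⟨g, hg1, hg2⟩ := exists_dual_vector'' ℝ x
    have hn : ‖(1 / 2 : ℝ) • g‖ ≤ 1 / 2 := by
      rw [norm_smul, Real.norm_eq_abs, abs_of_pos (by norm_num)]; linarith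
    have hmem : ‖(1 / 2 : ℝ) • g‖ ≤ c / d ∧
        ∀ s ∈ S, ∀ t ∈ S, |((1 / 2 : ℝ) • g) (s - t)| ≤ 1 := by
      refine ⟨hn.trans hhalf, fun s hs t ht => ?_⟩
      have h3 := ((1 / 2 : ℝ) • g).le_opNorm (s - t)
      rw [Real.norm_eq_abs] at h3
      have h4 : ‖s - t‖ ≤ 2 := by
        have := norm_sub_le s t
        linarith [hb s hs, hb t ht]
      have h5 : ‖(1 / 2 : ℝ) • g‖ * ‖s - t‖ ≤ (1 / 2) * 2 := by gcongr
      linarith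
    have h := le_ciSup (hbdd x) ⟨_, hmem⟩
    have h2 : |((1 / 2 : ℝ) • g) x| = 1 / 2 * ‖x‖ := by
      rw [ContinuousLinearMap.smul_apply, hg2, smul_eq_mul]
      exact abs_of_nonneg (by simp)
    simp only [h2] at h
    linarith
  refine ⟨fun x => ⨆ g : F, |g.1 x|, ⟨fun x => ⟨fun h => ?_, ?_⟩, fun a x => ?_, fun x y => ?_⟩,
    ⟨d / c, 2, by positivity, by norm_num, fun x => ⟨?_, hlow x⟩, ?_⟩,
    1, one_pos, fun x hx y hy hxy => ?_⟩
  · have := hlow x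
    simp only at h
    rw [h] at this
    simpa using this
  · rintro rfl
    simp
  · simp only [map_smul, smul_eq_mul, abs_mul]
    exact (Real.mul_iSup_of_nonneg (abs_nonneg a) _).symm
  · refine ciSup_le fun g => ?_
    rw [map_add]
    exact (abs_add_le _ _).trans (add_le_add (le_ciSup (hbdd x) g) (le_ciSup (hbdd y) g))
  · have h : (⨆ g : F, |g.1 x|) ≤ c / d * ‖x‖ := ciSup_le (hle x)
    calc d / c * (⨆ g : F, |g.1 x|) ≤ d / c * (c / d * ‖x‖) := by gcongr
      _ = ‖x‖ := by field_simp
  · apply le_of_eq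
    field_simp
  · refine le_antisymm (ciSup_le fun g => g.2.2 x hx y hy) ?_
    obtain ⟨f, h1, h2, h3⟩ := hf x hx y hy hxy
    have hD : 0 < f y - f x := hd.trans_le h2
    have hmem : ‖(f y - f x)⁻¹ • f‖ ≤ c / d ∧
        ∀ s ∈ S, ∀ t ∈ S, |((f y - f x)⁻¹ • f) (s - t)| ≤ 1 := by
      constructor
      · rw [norm_smul, Real.norm_eq_abs, abs_of_pos (inv_pos.2 hD), ← div_eq_inv_mul]
        gcongr
      · intro s hs t ht
        rw [ContinuousLinearMap.smul_apply, smul_eq_mul, abs_mul, abs_of_pos (inv_pos.2 hD),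
          ← div_eq_inv_mul, div_le_one hD, map_sub, abs_le]
        obtain ⟨_, _⟩ := h3 s hs
        obtain ⟨_, _⟩ := h3 t ht
        constructor <;> linarith
    have h := le_ciSup (hbdd (x - y)) ⟨_, hmem⟩
    have e : |((f y - f x)⁻¹ • f) (x - y)| = 1 := by
      rw [ContinuousLinearMap.smul_apply, smul_eq_mul, abs_mul, abs_of_pos (inv_pos.2 hD),
        map_sub, abs_sub_comm, abs_of_pos hD, inv_mul_cancel₀ hD.ne']
    simp only [e] at h
    exact h
end

section
/- Let (X, ‖·‖) be a real Banach space and let S ⊆ X be a bounded and separated antipodal set with constants c₁ = 1, c₂ = c and d. Let K be the closed convex hull of (d/c)·B_X ∪ {x − y : x, y ∈ S}, where B_X is the closed unit ball. Then (d/c)·B_X ⊆ K ⊆ 2·B_X, K is the unit ball of an equivalent norm ‖·‖_K (the Minkowski functional of K), and ‖x − y‖_K = 1 for all x, y ∈ S with x ≠ y; in particular S is a 1-equilateral set in (X, ‖·‖_K). -/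
open scoped Pointwise
/-- The key construction in the proof of **Theorem 3**: for a bounded and separated
antipodal set `S` with constants `1, c, d`, the set
`K = closed convex hull of ((d/c) • B_X ∪ {x - y : x, y ∈ S})` satisfies
`(d/c) • B_X ⊆ K ⊆ 2 • B_X`, `K` is the unit ball of the equivalent norm given by its
Minkowski functional (gauge), and `gauge K (x - y) = 1` for all distinct `x, y ∈ S`,
i.e. `S` is `1`-equilateral for the gauge norm. -/
theorem antipodal_gauge_ball
    (X : Type*) [NormedAddCommGroup X] [NormedSpace ℝ X] [CompleteSpace X]
    (S : Set X) (hS : S.Nontrivial) {c d : ℝ} (hc : 0 < c) (hd : 0 < d)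
    (hant : BddSepAntipodal S 1 c d)
    (K : Set X)
    (hK : K = closure (convexHull ℝ
      (((d / c) • Metric.closedBall (0 : X) 1) ∪ {z | ∃ x ∈ S, ∃ y ∈ S, z = x - y}))) :
    ((d / c) • Metric.closedBall (0 : X) 1 ⊆ K) ∧
    (K ⊆ (2 : ℝ) • Metric.closedBall (0 : X) 1) ∧
    IsNorm (gauge K) ∧
    (∃ a b : ℝ, 0 < a ∧ 0 < b ∧ ∀ x, a * gauge K x ≤ ‖x‖ ∧ ‖x‖ ≤ b * gauge K x) ∧
    K = {x : X | gauge K x ≤ 1} ∧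
    (∀ x ∈ S, ∀ y ∈ S, x ≠ y → gauge K (x - y) = 1) := by
  obtain ⟨hb, ha⟩ := hant
  have hr : 0 < d / c := div_pos hd hc
  have hball : ∀ r : ℝ, 0 < r → r • Metric.closedBall (0 : X) 1 = Metric.closedBall (0 : X) r := by
    intro r hr
    rw [smul_closedBall _ _ zero_le_one, smul_zero, Real.norm_of_nonneg hr.le, mul_one]
  rw [hball _ hr] at hK ⊢
  rw [hball 2 two_pos]
  set T : Set X := Metric.closedBall (0 : X) (d / c) ∪ {z | ∃ x ∈ S, ∃ y ∈ S, z = x - y} with hT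
  have hTK : T ⊆ K := by
    rw [hK]
    exact (subset_convexHull ℝ T).trans subset_closure
  have hKmin : ∀ A : Set X, Convex ℝ A → IsClosed A → T ⊆ A → K ⊆ A := by
    intro A h1 h2 h3
    rw [hK]
    exact closure_minimal (convexHull_min h3 h1) h2
  have hKconv : Convex ℝ K := by
    rw [hK]
    exact (convex_convexHull ℝ T).closure
  have hKcl : IsClosed K := by
    rw [hK]
    exact isClosed_closure
  have h1 : Metric.closedBall (0 : X) (d / c) ⊆ K := Set.subset_union_left.trans hTK
  have hdc : d / c ≤ 2 := by
    obtain ⟨x, hx, y, hy, hxy⟩ := hS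
    obtain ⟨f, hf, hdf, -⟩ := ha x hx y hy hxy
    rw [div_le_iff₀ hc]
    have e1 : f y - f x ≤ ‖f‖ * ‖y - x‖ := by
      rw [← map_sub]
      exact (le_abs_self _).trans (f.le_opNorm _)
    have e2 : ‖y - x‖ ≤ 2 := by
      have := norm_sub_le y x
      linarith [hb x hx, hb y hy]
    have e3 : ‖f‖ * ‖y - x‖ ≤ c * 2 := mul_le_mul hf e2 (norm_nonneg _) hc.le
    linarith
  have h2 : K ⊆ Metric.closedBall (0 : X) 2 := by
    apply hKmin _ (convex_closedBall _ _) Metric.isClosed_closedBall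
    rintro z (hz | ⟨x, hx, y, hy, rfl⟩)
    · exact Metric.closedBall_subset_closedBall hdc hz
    · rw [mem_closedBall_zero_iff]
      have := norm_sub_le x y
      linarith [hb x hx, hb y hy]
  have hKsymm : ∀ x ∈ K, -x ∈ K := by
    have : K ⊆ -K := by
      apply hKmin _ hKconv.neg hKcl.neg
      rintro z (hz | ⟨x, hx, y, hy, rfl⟩)
      · apply h1
        simpa using hz
      · apply hTK
        exact Or.inr ⟨y, hy, x, hx, by abel⟩
    exact fun x hx => this hx
  have hnhds : K ∈ nhds (0 : X) := Filter.mem_of_superset (Metric.closedBall_mem_nhds 0 hr) h1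
  have habs : Absorbent ℝ K := absorbent_nhds_zero hnhds
  have hle : ∀ x, (d / c) * gauge K x ≤ ‖x‖ := by
    intro x
    have e1 := gauge_mono (absorbent_nhds_zero (Metric.closedBall_mem_nhds (0 : X) hr)) h1 x
    rw [gauge_closedBall hr.le] at e1
    rw [le_div_iff₀ hr] at e1
    linarith
  have hge : ∀ x, ‖x‖ ≤ 2 * gauge K x := by
    intro x
    have e1 := gauge_mono habs h2 x
    rw [gauge_closedBall zero_le_two, div_le_iff₀ two_pos] at e1
    linarith
  refine ⟨h1, h2, ⟨?_, ?_, ?_⟩, ⟨d / c, 2, hr, two_pos, fun x => ⟨hle x, hge x⟩⟩, ?_, ?_⟩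
  · intro x
    constructor
    · intro h
      have := hge x
      rw [h, mul_zero] at this
      exact norm_le_zero_iff.1 this
    · rintro rfl
      exact gauge_zero
  · intro a x
    rcases le_total 0 a with h | h
    · rw [gauge_smul_of_nonneg h, abs_of_nonneg h, smul_eq_mul]
    · rw [← gauge_neg hKsymm, ← neg_smul, gauge_smul_of_nonneg (neg_nonneg.2 h), abs_of_nonpos h,
        smul_eq_mul]
  · exact gauge_add_le hKconv habs
  · ext x
    rw [Set.mem_setOf_eq, gauge_le_one_iff_mem_closure hKconv hnhds, hKcl.closure_eq]
  · intro x hx y hy hxy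
    apply le_antisymm (gauge_le_one_of_mem (hTK (Or.inr ⟨x, hx, y, hy, rfl⟩)))
    by_contra! hlt
    obtain ⟨f, hf, hdf, hz⟩ := ha y hy x hx hxy.symm
    have hfK : K ⊆ {z | f z ≤ f x - f y} := by
      apply hKmin
      · exact convex_halfSpace_le f.isLinear _
      · exact isClosed_le f.continuous continuous_const
      · rintro z (hz' | ⟨u, hu, v, hv, rfl⟩)
        · rw [mem_closedBall_zero_iff] at hz'
          have e1 : f z ≤ ‖f‖ * ‖z‖ := (le_abs_self _).trans (f.le_opNorm _)
          have e2 : ‖f‖ * ‖z‖ ≤ c * (d / c) := mul_le_mul hf hz' (norm_nonneg _) hc.le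
          rw [mul_div_cancel₀ _ hc.ne'] at e2
          simp only [Set.mem_setOf_eq]
          linarith
        · simp only [Set.mem_setOf_eq, map_sub]
          linarith [(hz u hu).2, (hz v hv).1]
    obtain ⟨b, hb0, hb1, k, hk, hkb⟩ := exists_lt_of_gauge_lt habs hlt
    have e1 : f k ≤ f x - f y := hfK hk
    have e2 : b * f k = f x - f y := by
      rw [← map_sub, ← hkb]
      simp
    nlinarith
end

section
/- Let {(x_γ, x*_γ) : γ ∈ Γ} be a biorthogonal system in a real Banach space (X, ‖·‖) with ‖x_γ‖ = 1 and ‖x*_γ‖ ≤ c for all γ ∈ Γ. Then there exists an equivalent norm |||·||| on X of Banach–Mazur distance at most 2c from ‖·‖ such that {x_γ : γ ∈ Γ} is an equilateral set in (X, |||·|||). -/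
/-- **Corollary.** If `{(x γ, xs γ)}` is a biorthogonal system in a real Banach space `X`
with `‖x γ‖ = 1` and `‖xs γ‖ ≤ c`, then there is an equivalent norm `N` on `X` at
Banach–Mazur distance at most `2c` from the original norm (witnessed by the identity:
`a * N x ≤ ‖x‖ ≤ b * N x` with `b / a ≤ 2c`) in which `{x γ}` is equilateral. -/
theorem biorthogonal_renorm_equilateral
    (X : Type*) [NormedAddCommGroup X] [NormedSpace ℝ X] [CompleteSpace X]
    {Γ : Type*} [Nonempty Γ] [DecidableEq Γ] (x : Γ → X) (xs : Γ → X →L[ℝ] ℝ)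
    (hbi : ∀ α β : Γ, xs β (x α) = (if α = β then (1 : ℝ) else 0))
    {c : ℝ} (hnorm : ∀ γ, ‖x γ‖ = 1) (hdual : ∀ γ, ‖xs γ‖ ≤ c) :
    ∃ N : X → ℝ, IsNorm N ∧
      (∃ a b : ℝ, 0 < a ∧ 0 < b ∧ (∀ z, a * N z ≤ ‖z‖ ∧ ‖z‖ ≤ b * N z) ∧
        b / a ≤ 2 * c) ∧
      (∃ lam : ℝ, 0 < lam ∧
        ∀ γ₁ γ₂ : Γ, x γ₁ ≠ x γ₂ → N (x γ₁ - x γ₂) = lam) := by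
  have hle : ∀ γ z, |xs γ z| ≤ c * ‖z‖ := fun γ z => by
    have h1 := (xs γ).le_opNorm z
    rw [Real.norm_eq_abs] at h1
    exact h1.trans (mul_le_mul_of_nonneg_right (hdual γ) (norm_nonneg z))
  have hc : 1 ≤ c := by
    obtain ⟨γ⟩ := ‹Nonempty Γ›
    have h := hle γ (x γ)
    simpa [hbi, hnorm] using h
  have hbdd : ∀ z, BddAbove (Set.range fun γ => |xs γ z|) := fun z =>
    ⟨c * ‖z‖, by rintro _ ⟨γ, rfl⟩; exact hle γ z⟩
  have hsup : ∀ γ z, |xs γ z| ≤ ⨆ γ, |xs γ z| := fun γ z => le_ciSup (hbdd z) γ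
  have hlow : ∀ z, ‖z‖ ≤ 2 * max (‖z‖ / 2) (⨆ γ, |xs γ z|) := fun z => by
    have := le_max_left (‖z‖ / 2) (⨆ γ, |xs γ z|)
    linarith
  have hup : ∀ z, max (‖z‖ / 2) (⨆ γ, |xs γ z|) ≤ c * ‖z‖ := fun z => by
    refine max_le ?_ (ciSup_le fun γ => hle γ z)
    nlinarith [norm_nonneg z]
  refine ⟨fun z => max (‖z‖ / 2) (⨆ γ, |xs γ z|), ⟨fun z => ⟨fun h => ?_, fun h => ?_⟩,
    fun a z => ?_, fun y z => ?_⟩, ⟨1 / c, 2, by positivity, by norm_num,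
      fun z => ⟨?_, hlow z⟩, ?_⟩, 1, one_pos, fun α β hne => ?_⟩
  · have h2 := hlow z
    simp only at h
    rw [h] at h2
    exact norm_le_zero_iff.1 (by linarith)
  · subst h
    simp
  · simp only [map_smul, smul_eq_mul, abs_mul, norm_smul, Real.norm_eq_abs]
    rw [← Real.mul_iSup_of_nonneg (abs_nonneg a), mul_div_assoc,
      mul_max_of_nonneg _ _ (abs_nonneg a)]
  · refine max_le ?_ (ciSup_le fun γ => ?_)
    · have := le_max_left (‖y‖ / 2) (⨆ γ, |xs γ y|)
      have := le_max_left (‖z‖ / 2) (⨆ γ, |xs γ z|)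
      linarith [norm_add_le y z]
    · have h1 := (hsup γ y).trans (le_max_right (‖y‖ / 2) _)
      have h2 := (hsup γ z).trans (le_max_right (‖z‖ / 2) _)
      rw [map_add]
      exact (abs_add_le _ _).trans (add_le_add h1 h2)
  · have := hup z
    rw [one_div, inv_mul_le_iff₀ (by linarith)]
    exact this
  · rw [div_div_eq_mul_div, div_one]
  · have hab : α ≠ β := fun h => hne (by rw [h])
    apply le_antisymm
    · refine max_le ?_ (ciSup_le fun γ => ?_)
      · have := norm_sub_le (x α) (x β)
        rw [hnorm, hnorm] at this
        linarith
      · rw [map_sub, hbi, hbi]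
        split_ifs with h1 h2
        · exact absurd (h1.trans h2.symm) hab
        all_goals norm_num
    · have h1 := (hsup α (x α - x β)).trans (le_max_right (‖x α - x β‖ / 2) _)
      rw [map_sub, hbi, hbi, if_pos rfl, if_neg hab.symm] at h1
      simpa using h1
end

section
/- Let S be a λ-equilateral set in a real normed space (X, ‖·‖) and suppose S is bounded with M = sup{‖x‖ : x ∈ S} < ∞. Then S is a bounded and separated antipodal set with constants c₁ = M, c₂ = 1 and d = λ. -/
/-- **Example (3).** A bounded `λ`-equilateral set `S` in a real normed space, with
`M = sup {‖x‖ : x ∈ S}`, is a bounded and separated antipodal set with constants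
`c₁ = M`, `c₂ = 1` and `d = λ`. -/
theorem equilateral_bddSepAntipodal
    (X : Type*) [NormedAddCommGroup X] [NormedSpace ℝ X]
    (S : Set X) {lam : ℝ} (hlam : 0 < lam)
    (heq : ∀ x ∈ S, ∀ y ∈ S, x ≠ y → ‖x - y‖ = lam)
    {M : ℝ} (hM : IsLUB ((fun x => ‖x‖) '' S) M) :
    BddSepAntipodal S M 1 lam := by
  refine ⟨fun x hx => hM.1 ⟨x, hx, rfl⟩, fun x hx y hy hxy => ?_⟩
  obtain ⟨f, hf, hfe⟩ := exists_dual_vector'' ℝ (y - x)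
  have hyx : f y - f x = lam := by
    rw [← map_sub, hfe, heq y hy x hx hxy.symm]; rfl
  have hle : ∀ a ∈ S, ∀ b ∈ S, f a - f b ≤ lam := by
    intro a ha b hb
    by_cases hab : a = b
    · subst hab; simpa using hlam.le
    · rw [← map_sub, ← heq a ha b hb hab]
      calc f (a - b) ≤ ‖f (a - b)‖ := le_abs_self _
        _ ≤ 1 * ‖a - b‖ := f.le_of_opNorm_le hf _
        _ = ‖a - b‖ := one_mul _
  refine ⟨f, hf, hyx.ge, fun z hz => ⟨?_, ?_⟩⟩
  · linarith [hle y hy z hz]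
  · linarith [hle z hz x hx]
end

section
/- Let (X, ‖·‖) be a real normed space, Z a linear subspace of X, and |||·||| a norm on Z such that c₁|||x||| ≤ ‖x‖ ≤ c₂|||x||| for all x ∈ Z, where 0 < c₁ ≤ c₂. Then there exists a norm |||·|||' on all of X extending the comparison, i.e. c₁|||x|||' ≤ ‖x‖ ≤ c₂|||x|||' for all x ∈ X, and |||x|||' = |||x||| for all x ∈ Z. -/
/-- **Remark 1(1).** If `Z` is a linear subspace of a real normed space `X` and `N` is a
norm on `Z` satisfying `c₁ * N z ≤ ‖z‖ ≤ c₂ * N z` on `Z` (with `0 < c₁ ≤ c₂`), then `N`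
extends to a norm `N'` on all of `X` satisfying `c₁ * N' x ≤ ‖x‖ ≤ c₂ * N' x` for all
`x ∈ X`. -/
theorem norm_extension_subspace
    (X : Type*) [NormedAddCommGroup X] [NormedSpace ℝ X]
    (Z : Subspace ℝ X) (N : Z → ℝ) (hN : IsNorm N)
    {c₁ c₂ : ℝ} (hc₁ : 0 < c₁) (hc₁₂ : c₁ ≤ c₂)
    (hcomp : ∀ z : Z, c₁ * N z ≤ ‖z‖ ∧ ‖z‖ ≤ c₂ * N z) :
    ∃ N' : X → ℝ, IsNorm N' ∧
      (∀ x : X, c₁ * N' x ≤ ‖x‖ ∧ ‖x‖ ≤ c₂ * N' x) ∧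
      ∀ z : Z, N' (z : X) = N z := by
  obtain ⟨h0, hsm, hadd⟩ := hN
  have hc₂ : 0 < c₂ := lt_of_lt_of_le hc₁ hc₁₂
  let N' : X → ℝ := fun x => ⨅ z : Z, (N z + ‖x - (z : X)‖ / c₁)
  have hlow : ∀ (x : X) (z : Z), ‖x‖ / c₂ ≤ N z + ‖x - (z : X)‖ / c₁ := by
    intro x z
    have h1 : ‖(z : X)‖ / c₂ ≤ N z := by
      rw [div_le_iff₀ hc₂, mul_comm]
      exact (hcomp z).2
    have h2 : ‖x - (z : X)‖ / c₂ ≤ ‖x - (z : X)‖ / c₁ :=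
      div_le_div_of_nonneg_left (norm_nonneg _) hc₁ hc₁₂
    have h3 : ‖x‖ / c₂ ≤ (‖(z : X)‖ + ‖x - (z : X)‖) / c₂ := by
      apply div_le_div_of_nonneg_right _ hc₂.le
      simpa using norm_add_le (z : X) (x - z)
    rw [add_div] at h3
    linarith
  have hbdd : ∀ x : X, BddBelow (Set.range fun z : Z => N z + ‖x - (z : X)‖ / c₁) := by
    intro x
    refine ⟨‖x‖ / c₂, ?_⟩
    rintro _ ⟨z, rfl⟩
    exact hlow x z
  have hle : ∀ (x : X) (z : Z), N' x ≤ N z + ‖x - (z : X)‖ / c₁ :=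
    fun x z => ciInf_le (hbdd x) z
  have hge : ∀ x, ‖x‖ / c₂ ≤ N' x := fun x => le_ciInf (hlow x)
  have hN0 : N 0 = 0 := (h0 0).2 rfl
  have hup : ∀ x, N' x ≤ ‖x‖ / c₁ := by
    intro x
    simpa [hN0] using hle x 0
  have hz0 : N' 0 = 0 := le_antisymm (by simpa using hup 0) (by simpa using hge 0)
  have hsmle : ∀ (a : ℝ) (x : X), a ≠ 0 → N' (a • x) ≤ |a| * N' x := by
    intro a x ha
    have hpos : 0 < |a| := abs_pos.2 ha
    rw [← div_le_iff₀' hpos]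
    refine le_ciInf fun z => ?_
    rw [div_le_iff₀' hpos]
    refine (hle (a • x) (a • z)).trans (le_of_eq ?_)
    rw [hsm, Submodule.coe_smul, ← smul_sub, norm_smul, Real.norm_eq_abs]
    ring
  refine ⟨N', ⟨?_, ?_, ?_⟩, ?_, ?_⟩
  · intro x
    constructor
    · intro h
      have h1 := hge x
      rw [h, div_le_iff₀ hc₂, zero_mul] at h1
      exact norm_le_zero_iff.1 h1
    · rintro rfl
      exact hz0
  · intro a x
    by_cases ha : a = 0
    · subst ha
      simp [hz0]
    · refine le_antisymm (hsmle a x ha) ?_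
      have h := hsmle a⁻¹ (a • x) (inv_ne_zero ha)
      rw [inv_smul_smul₀ ha, abs_inv] at h
      have hpos : 0 < |a| := abs_pos.2 ha
      rwa [← div_eq_inv_mul, le_div_iff₀' hpos] at h
  · intro x y
    have key : ∀ z w : Z, N' (x + y) ≤
        (N z + ‖x - (z : X)‖ / c₁) + (N w + ‖y - (w : X)‖ / c₁) := by
      intro z w
      have h1 := hle (x + y) (z + w)
      have h2 := hadd z w
      have h3 : ‖x + y - ((z + w : Z) : X)‖ / c₁ ≤
          (‖x - (z : X)‖ + ‖y - (w : X)‖) / c₁ := by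
        apply div_le_div_of_nonneg_right _ hc₁.le
        rw [Submodule.coe_add, add_sub_add_comm]
        exact norm_add_le _ _
      rw [add_div] at h3
      linarith
    have h1 : ∀ w : Z, N' (x + y) - (N w + ‖y - (w : X)‖ / c₁) ≤ N' x := by
      intro w
      refine le_ciInf fun z => ?_
      linarith [key z w]
    have h2 : N' (x + y) - N' x ≤ N' y := by
      refine le_ciInf fun w => ?_
      linarith [h1 w]
    linarith
  · intro x
    have h1 := hup x
    have h2 := hge x
    rw [le_div_iff₀' hc₁] at h1
    rw [div_le_iff₀' hc₂] at h2
    exact ⟨h1, h2⟩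
  · intro z
    refine le_antisymm (by simpa using hle z z) (le_ciInf fun w => ?_)
    have h1 := hadd w (z - w)
    rw [add_sub_cancel] at h1
    have h2 := (hcomp (z - w)).1
    rw [← le_div_iff₀' hc₁] at h2
    have h3 : ‖z - w‖ = ‖(z : X) - (w : X)‖ := rfl
    rw [h3] at h2
    linarith
end

section
/- Let K be an infinite compact Hausdorff space. Then the unit sphere of the Banach space C(K) of real-valued continuous functions on K with the supremum norm contains an infinite 2-equilateral set; i.e., there exists a sequence (xₙ) in C(K) with ‖xₙ‖_∞ = 1 for all n and ‖xₙ − xₘ‖_∞ = 2 for all n ≠ m. -/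
/-- **Note (2).** For every infinite compact Hausdorff space `K`, the unit sphere of the
Banach space `C(K, ℝ)` (with the sup norm) contains an infinite `2`-equilateral set:
there is a sequence of norm-one functions with pairwise distances all equal to `2`. -/
theorem CK_two_equilateral_sequence
    (K : Type*) [TopologicalSpace K] [CompactSpace K] [T2Space K] [Infinite K] :
    ∃ x : ℕ → C(K, ℝ), (∀ n, ‖x n‖ = 1) ∧ ∀ n m : ℕ, n ≠ m → ‖x n - x m‖ = 2 := by
  let p : ℕ ↪ K := Infinite.natEmbedding K
  have H : ∀ n : ℕ, ∃ x : C(K, ℝ), ‖x‖ = 1 ∧ x (p n) = 1 ∧ ∀ k < n, x (p k) = -1 := by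
    intro n
    obtain ⟨g, h0, h1, hg⟩ := exists_continuous_zero_one_of_isClosed
      (s := p '' Set.Iio n) (t := {p n})
      ((Set.finite_Iio n).image p).isClosed isClosed_singleton (by
        rw [Set.disjoint_singleton_right]
        rintro ⟨k, hk, e⟩
        have := p.injective e
        simp at hk
        omega)
    have hn : g (p n) = 1 := h1 rfl
    have hx : (g + g - 1 : C(K, ℝ)) (p n) = 1 := by
      simp [hn]
    refine ⟨g + g - 1, le_antisymm ?_ ?_, hx, ?_⟩
    · rw [ContinuousMap.norm_le _ zero_le_one]
      intro t
      have := hg t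
      simp only [ContinuousMap.sub_apply, ContinuousMap.add_apply, ContinuousMap.one_apply,
        Real.norm_eq_abs, abs_le]
      constructor <;> linarith [this.1, this.2]
    · have := (g + g - 1 : C(K, ℝ)).norm_coe_le_norm (p n)
      rw [hx] at this
      simpa using this
    · intro k hk
      have : g (p k) = 0 := h0 ⟨k, hk, rfl⟩
      simp [this]
  choose x hx1 hx2 hx3 using H
  have key : ∀ n m : ℕ, n < m → ‖x n - x m‖ = 2 := by
    intro n m h
    apply le_antisymm
    · have := norm_sub_le (x n) (x m)
      rw [hx1, hx1] at this
      linarith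
    · have := (x n - x m).norm_coe_le_norm (p n)
      rw [ContinuousMap.sub_apply, hx2, hx3 m n h, Real.norm_eq_abs] at this
      norm_num at this
      exact this
  refine ⟨x, hx1, fun n m h => ?_⟩
  rcases lt_or_gt_of_ne h with h | h
  · exact key n m h
  · rw [norm_sub_rev]; exact key m n h
end

section
/- Every infinite dimensional real Banach space X contains an infinite bounded and separated antipodal set with constants c₁ = 1, c₂ = 1 and d = 1. Consequently, defining ant(X) = sup{d > 0 : X contains an infinite bounded and separated antipodal set with constants c₁ = c₂ = 1 and separation constant d}, one has ant(X) ≥ 1; moreover ant(X) ≤ 2. -/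
namespace AntAux
open Finsupp

abbrev Ch (V : Type*) := List V →₀ ZMod 2

variable {V : Type*}

noncomputable def cns (a : V) : Ch V →ₗ[ZMod 2] Ch V := Finsupp.lmapDomain _ _ (List.cons a)
noncomputable def mp (g : V → V) : Ch V →ₗ[ZMod 2] Ch V := Finsupp.lmapDomain _ _ (List.map g)
noncomputable def sg (l : List V) : Ch V := Finsupp.single l 1

noncomputable def bd : List V → Ch V
  | [] => 0
  | a :: l => sg l + cns a (bd l)

noncomputable def D : Ch V →ₗ[ZMod 2] Ch V := Finsupp.linearCombination (ZMod 2) bd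

noncomputable def pr (g g' : V → V) : List V → Ch V
  | [] => 0
  | a :: l => sg (g a :: g' a :: l.map g') + cns (g a) (pr g g' l)

noncomputable def P (g g' : V → V) : Ch V →ₗ[ZMod 2] Ch V :=
  Finsupp.linearCombination (ZMod 2) (pr g g')

@[simp] lemma cns_sg (a : V) (l : List V) : cns a (sg l) = sg (a :: l) := by simp [cns, sg]
@[simp] lemma mp_sg (g : V → V) (l : List V) : mp g (sg l) = sg (l.map g) := by simp [mp, sg]
@[simp] lemma D_sg (l : List V) : D (sg l) = bd l := by simp [D, sg]
@[simp] lemma P_sg (g g' : V → V) (l : List V) : P g g' (sg l) = pr g g' l := by simp [P, sg]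

lemma add_self_ch (x : Ch V) : x + x = 0 := by
  ext l; simp [CharTwo.add_self_eq_zero]

lemma ch_ext {M : Type*} [AddCommMonoid M] [Module (ZMod 2) M] {f g : Ch V →ₗ[ZMod 2] M}
    (h : ∀ l, f (sg l) = g (sg l)) : f = g := by
  apply Finsupp.lhom_ext'
  intro l
  ext
  exact h l

lemma D_cns (a : V) (x : Ch V) : D (cns a x) = x + cns a (D x) := by
  have : D ∘ₗ cns a = LinearMap.id + cns a ∘ₗ D := by
    apply ch_ext; intro l; simp [bd]
  simpa using LinearMap.congr_fun this x

lemma P_cns (g g' : V → V) (a : V) (x : Ch V) :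
    P g g' (cns a x) = cns (g a) (cns (g' a) (mp g' x)) + cns (g a) (P g g' x) := by
  have : P g g' ∘ₗ cns a = cns (g a) ∘ₗ cns (g' a) ∘ₗ mp g' + cns (g a) ∘ₗ P g g' := by
    apply ch_ext; intro l; simp [pr]
  simpa using LinearMap.congr_fun this x

lemma D_mp (g : V → V) (x : Ch V) : D (mp g x) = mp g (D x) := by
  have : D ∘ₗ mp g = mp g ∘ₗ D := by
    apply ch_ext; intro l
    induction l with
    | nil => simp [bd]
    | cons a l ih =>
      have h2 : mp g ∘ₗ cns a = cns (g a) ∘ₗ mp g := by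
        apply ch_ext; intro l; simp
      have h3 := LinearMap.congr_fun h2 (bd l)
      simp [bd] at ih h3 ⊢
      rw [h3, ih]
  simpa using LinearMap.congr_fun this x

lemma D_P_sg (g g' : V → V) (l : List V) :
    D (pr g g' l) = P g g' (bd l) + (sg (l.map g) + sg (l.map g')) := by
  induction l with
  | nil => simp [bd, pr, add_self_ch]
  | cons a l ih =>
    simp only [pr, bd, map_add, D_sg, D_cns, ih, P_cns, P_sg, cns_sg, List.map_cons]
    have h := D_mp g' (sg l)
    simp only [mp_sg, D_sg] at h
    rw [h]
    have e1 := add_self_ch (cns (g a) (cns (g' a) (mp g' (bd l))))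
    have e2 := add_self_ch (sg (g a :: l.map g'))
    have e3 := add_self_ch (pr g g' l)
    have e4 := add_self_ch (cns (g a) (P g g' (bd l)))
    generalize cns (g a) (cns (g' a) (mp g' (bd l))) = u1 at *
    generalize cns (g a) (P g g' (bd l)) = u2 at *
    generalize sg (g a :: l.map g') = u3 at *
    generalize sg (g a :: l.map g) = u5 at *
    generalize sg (g' a :: l.map g') = u6 at *
    generalize pr g g' l = u4 at *
    calc _ = (u6 + u5 + u1 + u2 + u4) + (u3 + u3) := by abel
      _ = _ := by rw [e2]; abel

lemma D_P (g g' : V → V) (x : Ch V) :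
    D (P g g' x) = P g g' (D x) + (mp g x + mp g' x) := by
  have : D ∘ₗ P g g' = P g g' ∘ₗ D + (mp g + mp g') := by
    apply ch_ext; intro l; simpa using D_P_sg g g' l
  simpa using LinearMap.congr_fun this x

/-- telescoped homotopy -/
lemma D_sum_P (g : ℕ → V → V) (z : Ch V) (hz : D z = 0) (M : ℕ) :
    D (∑ j ∈ Finset.range M, P (g j) (g (j+1)) z) = mp (g 0) z + mp (g M) z := by
  induction M with
  | zero => simp [add_self_ch]
  | succ M ih =>
    rw [Finset.sum_range_succ, map_add, ih, D_P, hz]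
    have e := add_self_ch (mp (g M) z)
    calc _ = mp (g 0) z + mp (g (M+1)) z + (mp (g M) z + mp (g M) z) := by simp; abel
      _ = _ := by rw [e, add_zero]

def alpha (s : ℕ → V → ZMod 2) : ℕ → List V → ZMod 2
  | _, [] => 0
  | i, [a] => s i a
  | i, a :: b :: l => (s i a + s i b) * alpha s (i+1) (b :: l)

def beta (s : ℕ → V → ZMod 2) : ℕ → List V → ZMod 2
  | _, [] => 0
  | _, [_] => 1
  | i, a :: b :: l => (s i a + s i b) * beta s (i+1) (b :: l)

noncomputable def pair (α : List V → ZMod 2) : Ch V →ₗ[ZMod 2] ZMod 2 :=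
  Finsupp.linearCombination (ZMod 2) α

@[simp] lemma pair_sg (α : List V → ZMod 2) (l : List V) : pair α (sg l) = α l := by
  simp [pair, sg]

lemma alpha_cns2 (s : ℕ → V → ZMod 2) (i : ℕ) (a b : V) (x : Ch V) :
    pair (alpha s i) (cns a (cns b x)) = (s i a + s i b) * pair (alpha s (i+1)) (cns b x) := by
  have : pair (alpha s i) ∘ₗ cns a ∘ₗ cns b
      = (s i a + s i b) • (pair (alpha s (i+1)) ∘ₗ cns b) := by
    apply ch_ext; intro l; simp [alpha]
  simpa using LinearMap.congr_fun this x

lemma alpha_bd (s : ℕ → V → ZMod 2) (a b : V) (l : List V) : ∀ i,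
    pair (alpha s i) (bd (a :: b :: l)) = beta s i (a :: b :: l) := by
  induction l generalizing a b with
  | nil => intro i; simp [bd, beta, alpha]; ring
  | cons c l ih =>
    intro i
    have h1 := ih b c (i+1)
    have h2 := alpha_cns2 s i a b (bd (c :: l))
    rw [show beta s i (a :: b :: c :: l) = (s i a + s i b) * beta s (i+1) (b :: c :: l) from rfl,
      ← h1]
    rw [show bd (a :: b :: c :: l) = sg (b :: c :: l) + (sg (a :: c :: l)
      + cns a (cns b (bd (c :: l)))) by simp [bd]]
    rw [show bd (b :: c :: l) = sg (c :: l) + cns b (bd (c :: l)) from rfl]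
    simp only [map_add, h2, pair_sg, alpha, mul_add]
    have : s i c + s i c = 0 := CharTwo.add_self_eq_zero _
    linear_combination (alpha s (i+1) (c :: l)) * this

lemma alpha_neg [Neg V] (s : ℕ → V → ZMod 2) (a : V) (l : List V) : ∀ i,
    (∀ j, ∀ v ∈ a :: l, s j (-v) = s j v + 1) →
    alpha s i (a :: l) + alpha s i ((a :: l).map Neg.neg) = beta s i (a :: l) := by
  induction l generalizing a with
  | nil =>
    intro i h
    have : s i a + s i a = 0 := CharTwo.add_self_eq_zero _
    simp [alpha, beta, h]
    linear_combination this
  | cons b l ih =>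
    intro i h
    have h1 := ih b (i+1) (fun j v hv => h j v (List.mem_cons_of_mem _ hv))
    simp only [List.map_cons, alpha, beta] at h1 ⊢
    rw [← h1, h i a (by simp), h i b (by simp)]
    have : (1 : ZMod 2) + 1 = 0 := by decide
    linear_combination alpha s (i+1) (-b :: l.map Neg.neg) * this

lemma beta_ne (s : ℕ → V → ZMod 2) (l : List V) : ∀ i, beta s i l ≠ 0 →
    ∀ j, j + 1 < l.length → ∃ a ∈ l, ∃ b ∈ l, s (i + j) a ≠ s (i + j) b := by
  induction l with
  | nil => simp
  | cons a l ih =>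
    intro i h j hj
    cases l with
    | nil => simp at hj
    | cons b l =>
      simp only [beta] at h
      cases j with
      | zero =>
        refine ⟨a, by simp, b, by simp, fun e => ?_⟩
        apply h
        simp only [add_zero] at e
        rw [e, CharTwo.add_self_eq_zero, zero_mul]
      | succ j =>
        obtain ⟨a', ha', b', hb', hn⟩ := ih (i+1) (right_ne_zero_of_mul h) j (by simpa using hj)
        refine ⟨a', List.mem_cons_of_mem _ ha', b', List.mem_cons_of_mem _ hb', ?_⟩
        rwa [show i + (j+1) = i + 1 + j by ring]


noncomputable def Sp (Q : Set (List V)) : Submodule (ZMod 2) (Ch V) := Submodule.span (ZMod 2) (sg '' Q)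

lemma sg_mem {Q : Set (List V)} {l : List V} (h : l ∈ Q) : sg l ∈ Sp Q :=
  Submodule.subset_span ⟨l, h, rfl⟩

lemma Sp_map {Q Q' : Set (List V)} (f : Ch V →ₗ[ZMod 2] Ch V)
    (h : ∀ l ∈ Q, f (sg l) ∈ Sp Q') {x : Ch V} (hx : x ∈ Sp Q) : f x ∈ Sp Q' := by
  have : Sp Q ≤ (Sp Q').comap f := by
    apply Submodule.span_le.2
    rintro _ ⟨l, hl, rfl⟩
    exact h l hl
  exact this hx

lemma Sp_mono {Q Q' : Set (List V)} (h : Q ⊆ Q') : Sp Q ≤ Sp Q' :=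
  Submodule.span_mono (Set.image_mono h)

lemma Sp_eq {Q : Set (List V)} {M : Type*} [AddCommMonoid M] [Module (ZMod 2) M]
    (f g : Ch V →ₗ[ZMod 2] M)
    (h : ∀ l ∈ Q, f (sg l) = g (sg l)) {x : Ch V} (hx : x ∈ Sp Q) : f x = g x := by
  have : Sp Q ≤ LinearMap.eqLocus f g := by
    apply Submodule.span_le.2
    rintro _ ⟨l, hl, rfl⟩
    exact h l hl
  exact this hx

lemma pr_mem (g g' : V → V) (l : List V) :
    pr g g' l ∈ Sp {m | m.length = l.length + 1 ∧ ∀ x ∈ m, ∃ a ∈ l, x = g a ∨ x = g' a} := by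
  induction l with
  | nil => simp [pr]
  | cons a l ih =>
    refine Submodule.add_mem _ (sg_mem ?_) (Sp_map (cns (g a)) ?_ ih)
    · refine ⟨by simp, ?_⟩
      intro x hx
      simp only [List.mem_cons, List.mem_map] at hx
      rcases hx with rfl | rfl | ⟨b, hb, rfl⟩
      · exact ⟨a, by simp, Or.inl rfl⟩
      · exact ⟨a, by simp, Or.inr rfl⟩
      · exact ⟨b, by simp [hb], Or.inr rfl⟩
    · rintro m ⟨hm1, hm2⟩
      rw [cns_sg]
      refine sg_mem ⟨by simp [hm1], ?_⟩
      intro x hx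
      rcases List.mem_cons.1 hx with rfl | hx
      · exact ⟨a, by simp, Or.inl rfl⟩
      · obtain ⟨b, hb, h⟩ := hm2 x hx
        exact ⟨b, by simp [hb], h⟩

def Q [PseudoMetricSpace V] (K : Set V) (ε : ℝ) (k : ℕ) : Set (List V) :=
  {l | l.length = k + 1 ∧ (∀ a ∈ l, a ∈ K) ∧ ∀ a ∈ l, ∀ b ∈ l, dist a b ≤ ε}

lemma mp_mp (g g' : V → V) (x : Ch V) : mp g (mp g' x) = mp (g ∘ g') x := by
  have : mp g ∘ₗ mp g' = mp (g ∘ g') := by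
    apply ch_ext; intro l; simp
  simpa using LinearMap.congr_fun this x

lemma mp_id (x : Ch V) : mp id x = x := by
  have : mp (id : V → V) = LinearMap.id := by
    apply ch_ext; intro l; simp
  simpa using LinearMap.congr_fun this x

lemma mp_neg_mem {X : Type*} [NormedAddCommGroup X] {K : Set X} (hK : ∀ x ∈ K, -x ∈ K) {ε : ℝ}
    {k : ℕ} {h : Ch X} (hh : h ∈ Sp (Q K ε k)) : mp Neg.neg h ∈ Sp (Q K ε k) := by
  refine Sp_map _ ?_ hh
  rintro l ⟨h1, h2, h3⟩
  rw [mp_sg]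
  refine sg_mem ⟨by simpa using h1, ?_, ?_⟩
  · intro a ha
    obtain ⟨b, hb, rfl⟩ := List.mem_map.1 ha
    exact hK _ (h2 b hb)
  · intro a ha a' ha'
    obtain ⟨b, hb, rfl⟩ := List.mem_map.1 ha
    obtain ⟨b', hb', rfl⟩ := List.mem_map.1 ha'
    rw [dist_neg_neg]
    exact h3 _ hb _ hb'

lemma big (X : Type*) [NormedAddCommGroup X] [NormedSpace ℝ X]
    (hX : ¬ FiniteDimensional ℝ X) (k : ℕ) :
    ∃ K : Set X, IsCompact K ∧ (∀ x ∈ K, -x ∈ K) ∧ (0 : X) ∉ K ∧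
      (∃ G : Submodule ℝ X, FiniteDimensional ℝ G ∧ ∀ x ∈ K, x ∈ G) ∧
      ∀ ε > 0, ∃ h ∈ Sp (Q K ε k), D h + mp Neg.neg (D h) = 0 ∧
        ∀ s : ℕ → X → ZMod 2, (∀ j, ∀ v ∈ K, s j (-v) = s j v + 1) → pair (beta s 0) h = 1 := by
  have hout : ∀ G : Submodule ℝ X, FiniteDimensional ℝ G → ∃ e : X, e ∉ G := by
    intro G hG
    by_contra! hc
    apply hX
    have : G = ⊤ := by ext x; simp [hc x]
    subst this
    exact Module.Finite.equiv (Submodule.topEquiv (R := ℝ) (M := X))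
  induction k with
  | zero =>
    obtain ⟨e, he⟩ := hout ⊥ inferInstance
    have he : e ≠ 0 := by simpa using he
    refine ⟨{e, -e}, (Set.toFinite _).isCompact, ?_, ?_, ⟨Submodule.span ℝ {e}, inferInstance, ?_⟩, ?_⟩
    · rintro x (rfl | rfl) <;> simp
    · simp [he, he.symm]
    · rintro x (rfl | rfl)
      · exact Submodule.mem_span_singleton_self _
      · exact Submodule.neg_mem _ (Submodule.mem_span_singleton_self _)
    · intro ε hε
      refine ⟨sg [e], sg_mem ⟨by simp, by simp, by simp [hε.le]⟩, ?_, ?_⟩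
      · simp [bd, add_self_ch]
      · intro s hs
        simp [beta]
  | succ k ih =>
    obtain ⟨K, hKc, hKs, hK0, ⟨G, hG, hKG⟩, H⟩ := ih
    obtain ⟨e, he⟩ := hout G hG
    let φ : ℝ × X → X := fun p => (1 - p.1) • p.2 + p.1 • e
    have hφ : Continuous φ := by fun_prop
    let K1 : Set X := φ '' (Set.Icc (0:ℝ) 1 ×ˢ K)
    have hK1 : IsCompact K1 := (isCompact_Icc.prod hKc).image hφ
    have hK1z : (0 : X) ∉ K1 := by
      rintro ⟨⟨t, v⟩, ⟨ht, hv⟩, h0⟩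
      simp only [φ] at h0
      by_cases ht0 : t = 0
      · subst ht0
        simp at h0
        exact hK0 (h0 ▸ hv)
      · apply he
        have : e = t⁻¹ • (-(1 - t) • v) := by
          rw [neg_smul, ← eq_neg_of_add_eq_zero_right h0, smul_smul, inv_mul_cancel₀ ht0, one_smul]
        rw [this]
        exact G.smul_mem _ (G.smul_mem _ (hKG v hv))
    have hKK1 : K ⊆ K1 := fun v hv => ⟨(0, v), ⟨by simp, hv⟩, by simp [φ]⟩
    let K2 : Set X := K1 ∪ Neg.neg '' K1
    refine ⟨K2, hK1.union (hK1.image continuous_neg), ?_, ?_,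
      ⟨G ⊔ Submodule.span ℝ {e}, inferInstance, ?_⟩, ?_⟩
    · rintro x (hx | ⟨y, hy, rfl⟩)
      · exact Or.inr ⟨x, hx, rfl⟩
      · left; simpa using hy
    · rintro (hx | ⟨y, hy, h0⟩)
      · exact hK1z hx
      · rw [neg_eq_zero] at h0
        exact hK1z (h0 ▸ hy)
    · have h1 : ∀ x ∈ K1, x ∈ G ⊔ Submodule.span ℝ {e} := by
        rintro _ ⟨⟨t, v⟩, ⟨ht, hv⟩, rfl⟩
        refine Submodule.add_mem _ (Submodule.smul_mem _ _ (Submodule.mem_sup_left (hKG v hv)))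
          (Submodule.smul_mem _ _ (Submodule.mem_sup_right (Submodule.mem_span_singleton_self e)))
      rintro x (hx | ⟨y, hy, rfl⟩)
      · exact h1 x hx
      · exact Submodule.neg_mem _ (h1 y hy)
    · intro ε hε
      obtain ⟨C, hC⟩ := hKc.isBounded.exists_norm_le
      obtain ⟨h, hh, hD, hs⟩ := H (ε/2) (by positivity)
      obtain ⟨M, hM⟩ := exists_nat_gt (max 0 ((C + ‖e‖) / (ε/2)))
      have hM0 : (0:ℝ) < M := (le_max_left _ _).trans_lt hM
      have hM1 : (C + ‖e‖) / M ≤ ε/2 := by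
        have := (le_max_right _ _).trans_lt hM
        rw [div_lt_iff₀ (by positivity)] at this
        rw [div_le_iff₀ hM0]
        linarith
      let g : ℕ → X → X := fun j v => φ (j / M, v)
      let z := h + mp Neg.neg h
      have hz : z ∈ Sp (Q K (ε/2) k) := Submodule.add_mem _ hh (mp_neg_mem hKs hh)
      have hDz : D z = 0 := by simp only [z, map_add, D_mp]; exact hD
      have hsum := D_sum_P g z hDz M
      have hg0 : g 0 = id := by funext v; simp [g, φ]
      have hgM : mp (g M) z = 0 := by
        simp only [z, map_add, mp_mp]
        have : g M ∘ Neg.neg = g M := by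
          funext v
          simp [g, φ, div_self hM0.ne']
        rw [this, add_self_ch]
      rw [hg0, mp_id, hgM, add_zero] at hsum
      have hmem : (∑ j ∈ Finset.range M, P (g j) (g (j+1)) z) ∈ Sp (Q K2 ε (k+1)) := by
        refine Submodule.sum_mem _ fun j hj => ?_
        have hjM : j + 1 ≤ M := Finset.mem_range.1 hj
        have hjM' : (j:ℝ) + 1 ≤ M := by exact_mod_cast hjM
        refine Sp_map _ ?_ hz
        rintro l ⟨hl1, hl2, hl3⟩
        rw [P_sg]
        refine Sp_mono ?_ (pr_mem _ _ l)
        rintro m ⟨hm1, hm2⟩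
        have key : ∀ x ∈ m, ∃ a ∈ l, ∃ t : ℝ, (t = j / M ∨ t = (j+1) / M) ∧ x = φ (t, a) := by
          intro x hx
          obtain ⟨a, ha, h | h⟩ := hm2 x hx
          · exact ⟨a, ha, _, Or.inl rfl, h⟩
          · exact ⟨a, ha, _, Or.inr rfl, by simpa [g] using h⟩
        have tI : ∀ t : ℝ, (t = j / M ∨ t = (j+1) / M) → 0 ≤ t ∧ t ≤ 1 := by
          rintro t (rfl | rfl)
          · exact ⟨by positivity, by rw [div_le_one hM0]; linarith⟩
          · exact ⟨by positivity, by rw [div_le_one hM0]; linarith⟩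
        refine ⟨by omega, ?_, ?_⟩
        · intro x hx
          obtain ⟨a, ha, t, ht, rfl⟩ := key x hx
          exact Or.inl ⟨(t, a), ⟨tI t ht, hl2 a ha⟩, rfl⟩
        · intro x hx y hy
          obtain ⟨a, ha, t, ht, rfl⟩ := key x hx
          obtain ⟨b, hb, u, hu, rfl⟩ := key y hy
          have htu : |t - u| ≤ 1 / M := by
            have e1 : ((j:ℝ)+1)/M = j/M + 1/M := by ring
            have e2 : (0:ℝ) ≤ 1/M := by positivity
            rcases ht with rfl | rfl <;> rcases hu with rfl | rfl <;> rw [abs_le] <;>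
              constructor <;> linarith
          have eq : φ (t, a) - φ (u, b) = (1 - t) • (a - b) + (t - u) • (e - b) := by
            simp only [φ]; module
          rw [dist_eq_norm, eq]
          have hab : ‖a - b‖ ≤ ε/2 := by rw [← dist_eq_norm]; exact hl3 a ha b hb
          have heb : ‖e - b‖ ≤ C + ‖e‖ := by
            have := norm_sub_le e b
            have := hC b (hl2 b hb)
            linarith
          calc _ ≤ ‖(1 - t) • (a - b)‖ + ‖(t - u) • (e - b)‖ := norm_add_le _ _
            _ = |1 - t| * ‖a - b‖ + |t - u| * ‖e - b‖ := by simp [norm_smul]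
            _ ≤ 1 * (ε/2) + (1/M) * (C + ‖e‖) := by
              have := tI t ht
              gcongr
              rw [abs_le]; constructor <;> linarith
            _ = ε/2 + (C + ‖e‖)/M := by ring
            _ ≤ ε := by linarith
      refine ⟨_, hmem, ?_, ?_⟩
      · rw [hsum]
        simp only [z, map_add, mp_mp]
        have : (Neg.neg ∘ Neg.neg : X → X) = id := by funext x; simp
        rw [this, mp_id]
        calc _ = (h + h) + (mp Neg.neg h + mp Neg.neg h) := by abel
          _ = 0 := by rw [add_self_ch, add_self_ch, add_zero]
      · intro s hs2
        have hsK : ∀ j, ∀ v ∈ K, s j (-v) = s j v + 1 := fun j v hv => hs2 j v (Or.inl (hKK1 hv))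
        rw [← hs s hsK]
        have e1 := Sp_eq (pair (beta s 0)) (pair (alpha s 0) ∘ₗ D) (by
          rintro l ⟨hl, -, -⟩
          match l, hl with
          | a :: b :: l, _ => simp [alpha_bd]) hmem
        rw [e1, LinearMap.comp_apply, hsum]
        have e2 := Sp_eq (pair (alpha s 0) ∘ₗ (LinearMap.id + mp Neg.neg)) (pair (beta s 0)) (by
          rintro l ⟨hl, hl2, -⟩
          match l, hl, hl2 with
          | a :: l, _, hl2 =>
            have := alpha_neg s a l 0 (fun j v hv => hsK j v (hl2 v hv))
            simpa using this) hh
        simpa [z] using e2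

/-- A weak Borsuk-Ulam theorem. -/
lemma weak_BU (X : Type*) [NormedAddCommGroup X] [NormedSpace ℝ X]
    (hX : ¬ FiniteDimensional ℝ X) (n : ℕ) (f : Fin n → X → ℝ)
    (hf : ∀ i, ContinuousOn (f i) {0}ᶜ) (hodd : ∀ i x, f i (-x) = - f i x) :
    ∃ x ≠ 0, ∀ i, f i x = 0 := by
  by_contra! hno
  obtain ⟨K, hKc, hKs, hK0, -, H⟩ := big X hX n
  have hsub : K ⊆ {0}ᶜ := fun x hx h => hK0 (by rw [Set.mem_singleton_iff] at h; exact h ▸ hx)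
  let F : X → (Fin n → ℝ) := fun x i => f i x
  have hF : ContinuousOn F K := continuousOn_pi.2 fun i => (hf i).mono hsub
  obtain ⟨c, hc, hcK⟩ : ∃ c > 0, ∀ x ∈ K, c ≤ ‖F x‖ := by
    rcases K.eq_empty_or_nonempty with rfl | hne
    · exact ⟨1, one_pos, by simp⟩
    · obtain ⟨x, hx, hmin⟩ := hKc.exists_isMinOn hne hF.norm
      refine ⟨‖F x‖, ?_, fun y hy => hmin hy⟩
      rw [gt_iff_lt, norm_pos_iff]
      intro h0
      obtain ⟨i, hi⟩ := hno x (fun h => hK0 (h ▸ hx))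
      exact hi (congrFun h0 i)
  have huc := hKc.uniformContinuousOn_of_continuous hF
  rw [Metric.uniformContinuousOn_iff] at huc
  obtain ⟨δ, hδ, hun⟩ := huc (c/2) (by positivity)
  obtain ⟨h, hh, -, hs⟩ := H (δ/2) (by positivity)
  classical
  let σ : X → ZMod 2 := fun v => if WellOrderingRel v (-v) then 1 else 0
  have hσ : ∀ v ∈ K, σ (-v) = σ v + 1 := by
    intro v hv
    have hv0 : v ≠ -v := by
      intro h
      have h2 : (2 : ℝ) • v = 0 := by rw [two_smul]; exact add_eq_zero_iff_eq_neg.2 h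
      have : v = 0 := (smul_eq_zero.1 h2).resolve_left two_ne_zero
      exact hK0 (this ▸ hv)
    simp only [σ, neg_neg]
    rcases trichotomous_of (WellOrderingRel (α := X)) v (-v) with h | h | h
    · rw [if_neg (asymm h), if_pos h]; decide
    · exact absurd h hv0
    · rw [if_pos h, if_neg (asymm h)]; decide
  let s : ℕ → X → ZMod 2 := fun j v =>
    if hj : j < n then (if 0 < f ⟨j, hj⟩ v then 1 else if f ⟨j, hj⟩ v < 0 then 0 else σ v) else σ v
  have hsodd : ∀ j, ∀ v ∈ K, s j (-v) = s j v + 1 := by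
    intro j v hv
    simp only [s]
    split_ifs with h1 h2 h3 h4 h5 h6 h7 h8 <;> simp only [hodd] at * <;>
      first
        | exact hσ v hv
        | (exfalso; linarith)
        | decide
  have h1 := hs s hsodd
  have h0 := Sp_eq (pair (beta s 0)) 0 (by
    rintro l ⟨hl, hlK, hld⟩
    by_contra hb
    simp only [pair_sg, LinearMap.zero_apply] at hb
    obtain ⟨v, hv⟩ : ∃ v, v ∈ l := List.exists_mem_of_length_pos (by omega)
    have hclose : ∀ a ∈ l, ∀ b ∈ l, ∀ i, |f i a - f i b| < c/2 := by
      intro a ha b hb' i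
      have := hun a (hlK a ha) b (hlK b hb') (lt_of_le_of_lt (hld a ha b hb') (by linarith))
      exact lt_of_le_of_lt (dist_le_pi_dist (F a) (F b) i) this
    have hlt : ‖F v‖ < c := by
      rw [pi_norm_lt_iff hc]
      intro i
      obtain ⟨a, ha, b, hb', hne⟩ := beta_ne s l 0 hb i (by omega)
      rw [Real.norm_eq_abs]
      show |f i v| < c
      have hab := abs_lt.1 (hclose a ha b hb' i)
      have hva := abs_lt.1 (hclose v hv a ha i)
      have hvb := abs_lt.1 (hclose v hv b hb' i)
      by_contra hcon
      apply hne
      rcases le_abs.1 (not_lt.1 hcon) with h | h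
      · have p1 : 0 < f i a := by linarith
        have p2 : 0 < f i b := by linarith
        simp [s, p1, p2]
      · have p1 : f i a < 0 := by linarith
        have p2 : f i b < 0 := by linarith
        simp [s, p1, p2, p1.le.not_gt, p2.le.not_gt]
    exact absurd (hcK v (hlK v hv)) (not_le.2 hlt)) hh
  rw [h1] at h0
  exact one_ne_zero h0

/-- Krein-Krasnoselskii-Milman type lemma. -/
lemma kkm {X : Type*} [NormedAddCommGroup X] [NormedSpace ℝ X] (E F : Submodule ℝ X)
    [FiniteDimensional ℝ E] (hF : ¬ FiniteDimensional ℝ F) :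
    ∃ x ∈ F, x ≠ 0 ∧ ∀ e ∈ E, ‖x‖ ≤ ‖x + e‖ := by
  by_contra! hno
  let t : {x : F // x ≠ 0} → Set E := fun x => {e | ‖((x : F) : X) + e‖ < ‖((x : F) : X)‖}
  obtain ⟨g, hg⟩ := exists_continuous_forall_mem_convex_of_local_const (t := t) (by
      intro x
      have : t x = {e : E | e ∈ Set.univ ∧ ‖((x : F) : X) + e‖ < ‖((x : F) : X)‖} := by simp [t]
      rw [this]
      apply ConvexOn.convex_lt
      refine ⟨convex_univ, fun a _ b _ p q hp hq hpq => ?_⟩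
      have : ((x : F) : X) + ((p • a + q • b : E) : X)
          = p • (((x : F) : X) + a) + q • (((x : F) : X) + b) := by
        have : ((x : F) : X) = (p + q) • ((x : F) : X) := by rw [hpq, one_smul]
        push_cast
        nth_rewrite 1 [this]
        module
      show ‖((x : F) : X) + ((p • a + q • b : E) : X)‖ ≤ _
      rw [this]
      refine (norm_add_le _ _).trans ?_
      rw [norm_smul, norm_smul, Real.norm_of_nonneg hp, Real.norm_of_nonneg hq]
      rfl) (by
      intro x
      obtain ⟨e, he, hlt⟩ := hno ((x : F) : X) (x : F).2 (by simpa using x.2)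
      refine ⟨⟨e, he⟩, ?_⟩
      have hc1 : Continuous fun y : {x : F // x ≠ 0} => ‖((y.1 : F) : X) + e‖ := by fun_prop
      have hc2 : Continuous fun y : {x : F // x ≠ 0} => ‖((y.1 : F) : X)‖ := by fun_prop
      exact (hc1.continuousAt).eventually_lt hc2.continuousAt hlt)
  classical
  let g' : F → E := fun x => if h : x ≠ 0 then g ⟨x, h⟩ else 0
  have hg' : ContinuousOn g' {0}ᶜ := by
    rw [continuousOn_iff_continuous_domRestrict]
    have hgc : Continuous fun y : ({0}ᶜ : Set F) => g ⟨y.1, y.2⟩ := by fun_prop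
    refine hgc.congr ?_
    intro y
    have : (y : F) ≠ 0 := y.2
    simp [g', this]
  let B := Module.finBasis ℝ E
  obtain ⟨x, hx0, hx⟩ := weak_BU F hF _ (fun i x => B.coord i (g' x - g' (-x))) (by
      intro i
      have hc : Continuous (B.coord i) := LinearMap.continuous_of_finiteDimensional _
      refine hc.comp_continuousOn (hg'.sub (hg'.comp continuous_neg.continuousOn ?_))
      intro y hy
      simpa using hy) (by
      intro i x
      rw [neg_neg, ← map_neg, neg_sub])
  have hz : g' x - g' (-x) = 0 := by
    apply B.repr.injective
    ext i
    simpa using hx i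
  have hz := sub_eq_zero.1 hz
  have h1 : ‖(x : X) + g' x‖ < ‖(x : X)‖ := by
    simp only [g', dif_pos hx0]; exact hg ⟨x, hx0⟩
  have hx0' : -x ≠ 0 := neg_ne_zero.2 hx0
  have h2 : ‖-(x : X) + g' x‖ < ‖(x : X)‖ := by
    rw [hz]
    simp only [g', dif_pos hx0']
    have := hg ⟨-x, hx0'⟩
    simpa [t] using this
  have h3 : (x : X) + x = ((x : X) + g' x) - (-(x : X) + g' x) := by abel
  have h4 := norm_sub_le ((x : X) + g' x) (-(x : X) + g' x)
  rw [← h3, ← two_smul ℝ, norm_smul] at h4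
  norm_num at h4
  linarith

lemma day (X : Type*) [NormedAddCommGroup X] [NormedSpace ℝ X]
    (hX : ¬ FiniteDimensional ℝ X) :
    ∃ (x : ℕ → X) (f : ℕ → X →L[ℝ] ℝ), (∀ n, ‖x n‖ ≤ 1 ∧ ‖f n‖ ≤ 1 ∧ f n (x n) = 1) ∧
      ∀ m n, m ≠ n → f m (x n) = 0 := by
  obtain ⟨q, hq1, hq2⟩ := exists_seq_of_forall_finset_exists
    (fun p : X × (X →L[ℝ] ℝ) => ‖p.1‖ ≤ 1 ∧ ‖p.2‖ ≤ 1 ∧ p.2 p.1 = 1)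
    (fun p q => p.2 q.1 = 0 ∧ q.2 p.1 = 0) (by
      intro s _
      classical
      let E : Submodule ℝ X := Submodule.span ℝ (s.image Prod.fst : Finset X)
      let Φ : X →ₗ[ℝ] (s → ℝ) := LinearMap.pi fun p => (p.1.2 : X →ₗ[ℝ] ℝ)
      have hF : ¬ FiniteDimensional ℝ (LinearMap.ker Φ) := by
        intro hfin
        apply hX
        have : Module.Finite ℝ (X ⧸ LinearMap.ker Φ) :=
          Module.Finite.equiv Φ.quotKerEquivRange.symm
        exact Module.Finite.of_submodule_quotient (LinearMap.ker Φ)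
      have hE : FiniteDimensional ℝ E := FiniteDimensional.span_finset ℝ _
      obtain ⟨x, hxF, hx0, hx⟩ := kkm E (LinearMap.ker Φ) hF
      have hcl : IsClosed (E : Set X) := E.closed_of_finiteDimensional
      obtain ⟨g, hg1, hg2⟩ := exists_dual_vector'' ℝ (E.mkQ x)
      have hnx : ‖E.mkQ x‖ = ‖x‖ := by
        apply le_antisymm (Submodule.Quotient.norm_mk_le E x)
        by_contra! hlt
        obtain ⟨y, hy1, hy2⟩ := Submodule.Quotient.norm_mk_lt (S := E) (E.mkQ x) (sub_pos.2 hlt)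
        have hyE : y - x ∈ E := (Submodule.Quotient.eq E).1 hy1
        have := hx _ hyE
        rw [add_sub_cancel] at this
        rw [Submodule.mkQ_apply] at hy2
        linarith
      have hn0 : 0 < ‖x‖ := norm_pos_iff.2 hx0
      have hgb : ∀ y : X, ‖((g : (X ⧸ E) →ₗ[ℝ] ℝ) ∘ₗ E.mkQ) y‖ ≤ 1 * ‖y‖ := by
        intro y
        refine (g.le_opNorm (E.mkQ y)).trans ?_
        exact mul_le_mul hg1 (Submodule.Quotient.norm_mk_le E y) (norm_nonneg _) zero_le_one
      let f : X →L[ℝ] ℝ := LinearMap.mkContinuous ((g : (X ⧸ E) →ₗ[ℝ] ℝ) ∘ₗ E.mkQ) 1 hgb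
      refine ⟨(‖x‖⁻¹ • x, f), ⟨?_, LinearMap.mkContinuous_norm_le _ zero_le_one hgb, ?_⟩, ?_⟩
      · simp [norm_smul, hn0.ne']
      · have : f x = ‖x‖ := by
          show g (E.mkQ x) = _
          rw [hg2, hnx]; rfl
        simp [this, hn0.ne']
      · intro p hp
        constructor
        · have := congrFun (LinearMap.mem_ker.1 hxF) ⟨p, hp⟩
          have h' : p.2 x = 0 := this
          simp [h']
        · show g (E.mkQ p.1) = 0
          have : E.mkQ p.1 = 0 := by
            rw [Submodule.mkQ_apply, Submodule.Quotient.mk_eq_zero]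
            exact Submodule.subset_span (by simpa using ⟨p.2, hp⟩)
          rw [this, map_zero])
  refine ⟨fun n => (q n).1, fun n => (q n).2, hq1, ?_⟩
  intro m n hmn
  rcases lt_or_gt_of_ne hmn with h | h
  · exact (hq2 m n h).1
  · exact (hq2 n m h).2

end AntAux

/-- **Remark 4(1).** Every infinite dimensional real Banach space `X` contains an infinite
bounded and separated antipodal set with constants `c₁ = c₂ = 1` and `d = 1` (via Day's
theorem on Auerbach systems); consequently, with
`ant(X) = sup {d > 0 : X contains an infinite bounded and separated antipodal set with
constants 1, 1, d}`, one has `1 ≤ ant(X)`; moreover `ant(X) ≤ 2`. -/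
theorem ant_bounds
    (X : Type*) [NormedAddCommGroup X] [NormedSpace ℝ X] [CompleteSpace X]
    (hX : ¬ FiniteDimensional ℝ X) :
    (∃ S : Set X, S.Infinite ∧ BddSepAntipodal S 1 1 1) ∧
    (1 ≤ sSup {d : ℝ | 0 < d ∧ ∃ S : Set X, S.Infinite ∧ BddSepAntipodal S 1 1 d}) ∧
    (sSup {d : ℝ | 0 < d ∧ ∃ S : Set X, S.Infinite ∧ BddSepAntipodal S 1 1 d} ≤ 2) := by
  have hA : ∃ S : Set X, S.Infinite ∧ BddSepAntipodal S 1 1 1 := by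
    obtain ⟨x, f, h1, h2⟩ := AntAux.day X hX
    have hinj : Function.Injective x := by
      intro m n hmn
      by_contra hne
      have e1 := h2 m n hne
      rw [← hmn, (h1 m).2.2] at e1
      exact one_ne_zero e1
    refine ⟨Set.range x, Set.infinite_range_of_injective hinj, ?_, ?_⟩
    · rintro _ ⟨n, rfl⟩
      exact (h1 n).1
    · rintro _ ⟨m, rfl⟩ _ ⟨n, rfl⟩ hmn
      have hne : n ≠ m := fun h => hmn (by rw [h])
      refine ⟨f n, (h1 n).2.1, ?_, ?_⟩
      · rw [(h1 n).2.2, h2 n m hne]; norm_num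
      · rintro _ ⟨k, rfl⟩
        rw [(h1 n).2.2, h2 n m hne]
        by_cases hk : n = k
        · rw [← hk, (h1 n).2.2]; norm_num
        · rw [h2 n k hk]; norm_num
  have hB : ∀ d ∈ {d : ℝ | 0 < d ∧ ∃ S : Set X, S.Infinite ∧ BddSepAntipodal S 1 1 d}, d ≤ 2 := by
    rintro d ⟨-, S, hS, hb, hs⟩
    obtain ⟨x, hx, y, hy, hxy⟩ := hS.nontrivial
    obtain ⟨f, hf, hd, -⟩ := hs x hx y hy hxy
    have e1 := f.le_of_opNorm_le_of_le hf (hb x hx)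
    have e2 := f.le_of_opNorm_le_of_le hf (hb y hy)
    rw [Real.norm_eq_abs, abs_le] at e1 e2
    linarith [e1.1, e2.2]
  have hmem : (1 : ℝ) ∈ {d : ℝ | 0 < d ∧ ∃ S : Set X, S.Infinite ∧ BddSepAntipodal S 1 1 d} :=
    ⟨one_pos, hA⟩
  exact ⟨hA, le_csSup ⟨2, hB⟩ hmem, csSup_le ⟨1, hmem⟩ hB⟩
end
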